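/- Fix a type ℓ. Let (b, τ, ρ) ∈ Γ^ℓ be a parameter vector such that the self-similar IFS generated by F^{(b,τ,ρ)} has no exact overlapping. Then the map (b̂, τ̂, ρ̂) ↦ s_{(b̂,τ̂,ρ̂)} assigning to each parameter vector in Γ^ℓ the natural dimension of the corresponding CPLIFS is continuous at (b, τ, ρ). -/

import Mathlib

open Set Filter MeasureTheory

noncomputable section

/-- Composition `f_{i₁} ∘ ⋯ ∘ f_{iₙ}` of a family of maps of `ℝ` along a finite word
(the empty composition being the identity). -/
def compFam {ι : Type*} (S : ι → ℝ → ℝ) (w : List ι) : ℝ → ℝ :=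
  w.foldr (fun k g => S k ∘ g) id

/-- A family of maps of `ℝ` has *no exact overlapping* if for every `n ≥ 1` and all words
`ī, j̄` of length `n`, equality of the compositions `S_ī = S_j̄` (as functions) implies
`ī = j̄`. -/
def NoExactOverlap {ι : Type*} (S : ι → ℝ → ℝ) : Prop :=
  ∀ n : ℕ, 1 ≤ n → ∀ i j : Fin n → ι,
    compFam S (List.ofFn i) = compFam S (List.ofFn j) → i = j

/-- The supporting interval `I` of the system `{f_1, …, f_m}`:  if the maps have a common
fixed point `φ` (i.e. the attractor is the single point `φ`) it is `[φ - 1/2, φ + 1/2]`;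
otherwise it is the smallest nonempty compact interval sent into itself by all the maps,
i.e. the intersection of all such intervals. -/
def suppInt {m : ℕ} (f : Fin m → ℝ → ℝ) : Set ℝ :=
  haveI := Classical.propDecidable (∃ φ : ℝ, ∀ k, f k φ = φ)
  if h : ∃ φ : ℝ, ∀ k, f k φ = φ then
    Set.Icc (h.choose - 1 / 2) (h.choose + 1 / 2)
  else
    ⋂₀ {J : Set ℝ | J.Nonempty ∧ (∃ a b : ℝ, J = Set.Icc a b) ∧ ∀ k, f k '' J ⊆ J}

/-- The natural pressure function
`Φ(s) = limsup_{n → ∞} (1/n) log ∑_{(i₁,…,iₙ)} |I_{i₁…iₙ}|ˢ`. -/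
def pressure {m : ℕ} (f : Fin m → ℝ → ℝ) (s : ℝ) : ℝ :=
  Filter.limsup
    (fun n : ℕ =>
      (n : ℝ)⁻¹ * Real.log (∑ w : Fin n → Fin m,
        Metric.diam (compFam f (List.ofFn w) '' suppInt f) ^ s))
    Filter.atTop

/-- The index of the interval of linearity (determined by the breaking points `b`) in which
the point `u` lies: the number of breaking points lying below `u`. -/
def slopeIdx {lk : ℕ} (b : Fin lk → ℝ) (u : ℝ) : Fin (lk + 1) :=
  ⟨(Finset.univ.filter fun j : Fin lk => b j < u).card,
   Nat.lt_succ_of_le (le_trans (Finset.card_filter_le _ _) (by simp))⟩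

/-- The continuous piecewise linear function with breaking points `b`, slope `ρ i` on the
`i`-th interval of linearity, and value `τ` at `0`:  `x ↦ τ + ∫_0^x (slope at u) du`. -/
def plFun {lk : ℕ} (b : Fin lk → ℝ) (ρ : Fin (lk + 1) → ℝ) (τ : ℝ) (x : ℝ) : ℝ :=
  τ + ∫ u in (0 : ℝ)..x, ρ (slopeIdx b u)

variable (m : ℕ) (l : Fin m → ℕ)

/-- The space `ℝ^L` of breaking point data of type `ℓ`. -/
abbrev BSpace := (k : Fin m) → Fin (l k) → ℝ

/-- The space `ℝ^{L+m}` of slope data of type `ℓ`. -/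
abbrev RSpace := (k : Fin m) → Fin (l k + 1) → ℝ

/-- The full parameter space `ℝ^L × ℝ^m × ℝ^{L+m}` of CPLIFSs of type `ℓ`:
breaking points, vertical translations and slopes. -/
abbrev Param := BSpace m l × (Fin m → ℝ) × RSpace m l

/-- The family of piecewise linear maps `{f_1, …, f_m}` determined by a parameter
vector `(b, τ, ρ)`. -/
def paramFun (p : Param m l) : Fin m → ℝ → ℝ :=
  fun k => plFun (p.1 k) (p.2.2 k) (p.2.1 k)

/-- The set `Γ^ℓ` of admissible parameter vectors: breaking points strictly increasing,
slopes nonzero of modulus `< 1`, and consecutive slopes of each map distinct. -/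
def Gamma : Set (Param m l) :=
  {p | (∀ k, StrictMono (p.1 k)) ∧
       (∀ k i, p.2.2 k i ≠ 0 ∧ |p.2.2 k i| < 1) ∧
       (∀ k (i : Fin (l k)), p.2.2 k i.castSucc ≠ p.2.2 k i.succ)}

/-- The natural dimension of the CPLIFS with parameter vector `p`: the (unique) nonnegative
zero of the natural pressure function, i.e. `inf {s ≥ 0 | Φ_p(s) ≤ 0}`. -/
def natDim (p : Param m l) : ℝ :=
  sInf {s : ℝ | 0 ≤ s ∧ pressure (paramFun m l p) s ≤ 0}

/-! ### Piecewise linear functions -/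

theorem slopeIdx_lt_iff {n : ℕ} {b : Fin n → ℝ} (hb : StrictMono b) (u : ℝ) (j : Fin n) :
    b j < u ↔ (j : ℕ) < (slopeIdx b u : ℕ) := by
  have hdef : (slopeIdx b u : ℕ) = (Finset.univ.filter fun j : Fin n => b j < u).card := rfl
  rw [hdef]
  constructor
  · intro h
    have hsub : Finset.univ.filter (fun i : Fin n => i ≤ j) ⊆
        Finset.univ.filter fun j : Fin n => b j < u := by
      intro i hi
      simp only [Finset.mem_filter, Finset.mem_univ, true_and] at hi ⊢
      exact lt_of_le_of_lt (hb.monotone hi) h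
    have h2 := Finset.card_le_card hsub
    have h3 : (Finset.univ.filter (fun i : Fin n => i ≤ j)).card = (j : ℕ) + 1 := by
      have : Finset.univ.filter (fun i : Fin n => i ≤ j) = Finset.Iic j := by
        ext; simp
      rw [this, Fin.card_Iic]
    omega
  · intro h
    by_contra hn
    have hsub : (Finset.univ.filter fun j : Fin n => b j < u) ⊆
        Finset.univ.filter (fun i : Fin n => i < j) := by
      intro i hi
      simp only [Finset.mem_filter, Finset.mem_univ, true_and] at hi ⊢
      exact hb.lt_iff_lt.1 (lt_of_lt_of_le hi (not_lt.1 hn))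
    have h2 := Finset.card_le_card hsub
    have h3 : (Finset.univ.filter (fun i : Fin n => i < j)).card = (j : ℕ) := by
      have : Finset.univ.filter (fun i : Fin n => i < j) = Finset.Iio j := by
        ext; simp
      rw [this, Fin.card_Iio]
    omega

theorem telescope_aux (R : ℕ → ℝ) (c n : ℕ) (hc : c ≤ n) :
    ∑ i ∈ Finset.range n, (R (i + 1) - R i) * (if i < c then 1 else 0) = R c - R 0 := by
  induction n with
  | zero => simp [Nat.le_zero.1 hc]
  | succ n ih =>
    rw [Finset.sum_range_succ]
    rcases Nat.lt_or_ge n c with h | h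
    · have hcn : c = n + 1 := by omega
      have : ∑ i ∈ Finset.range n, (R (i + 1) - R i) * (if i < c then 1 else 0)
          = ∑ i ∈ Finset.range n, (R (i + 1) - R i) := by
        refine Finset.sum_congr rfl fun i hi => ?_
        rw [if_pos (by have := Finset.mem_range.1 hi; omega), mul_one]
      rw [this, Finset.sum_range_sub, if_pos h, hcn]; ring
    · rw [ih h, if_neg (by omega)]; ring

theorem slope_formula {n : ℕ} {b : Fin n → ℝ} (hb : StrictMono b) (ρ : Fin (n + 1) → ℝ) (u : ℝ) :
    ρ (slopeIdx b u) = ρ 0 + ∑ j : Fin n, (ρ j.succ - ρ j.castSucc) * (if b j < u then 1 else 0) := by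
  set R : ℕ → ℝ := fun i => if h : i < n + 1 then ρ ⟨i, h⟩ else 0 with hR
  have hc := (slopeIdx b u).isLt
  have key := telescope_aux R (slopeIdx b u) n (by omega)
  have h1 : ∑ j : Fin n, (ρ j.succ - ρ j.castSucc) * (if b j < u then (1:ℝ) else 0)
      = ∑ i ∈ Finset.range n, (R (i + 1) - R i) * (if i < (slopeIdx b u : ℕ) then 1 else 0) := by
    rw [← Fin.sum_univ_eq_sum_range
      (fun i => (R (i + 1) - R i) * (if i < (slopeIdx b u : ℕ) then (1:ℝ) else 0))]
    refine Finset.sum_congr rfl fun j _ => ?_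
    have e1 : R (j + 1) = ρ j.succ := by
      simp only [hR]; rw [dif_pos (by have := j.isLt; omega)]; rfl
    have e2 : R j = ρ j.castSucc := by
      simp only [hR]; rw [dif_pos (by have := j.isLt; omega)]; rfl
    rw [e1, e2]
    simp only [slopeIdx_lt_iff hb u j]
  rw [h1, key]
  have e3 : R (slopeIdx b u) = ρ (slopeIdx b u) := by
    simp only [hR]; rw [dif_pos hc]
  have e4 : R 0 = ρ 0 := by
    simp only [hR]; rw [dif_pos (by omega)]; rfl
  rw [e3, e4]; ring

theorem step_mono (c : ℝ) : Monotone (fun u : ℝ => if c < u then (1:ℝ) else 0) := by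
  intro x y hxy
  dsimp only
  split_ifs with h1 h2
  · exact le_rfl
  · exact absurd (lt_of_lt_of_le h1 hxy) h2
  · exact zero_le_one
  · exact le_rfl

theorem step_integral_aux (c x y : ℝ) (hxy : x ≤ y) :
    ∫ u in x..y, (if c < u then (1:ℝ) else 0) = max (y - c) 0 - max (x - c) 0 := by
  rw [intervalIntegral.integral_of_le hxy]
  have h1 : (fun u : ℝ => if c < u then (1:ℝ) else 0) = (Ioi c).indicator (fun _ => (1:ℝ)) := by
    ext u; simp [indicator]
  rw [h1, integral_indicator measurableSet_Ioi, Measure.restrict_restrict measurableSet_Ioi]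
  have h2 : Ioi c ∩ Ioc x y = Ioc (max c x) y := by
    ext u; simp only [mem_inter_iff, mem_Ioi, mem_Ioc, max_lt_iff]; tauto
  rw [h2]
  simp only [integral_const, smul_eq_mul, mul_one, measureReal_def, Measure.restrict_apply_univ,
    Real.volume_Ioc]
  rcases le_total c x with h | h
  · rw [max_eq_right h, max_eq_left (by linarith), max_eq_left (by linarith),
      ENNReal.toReal_ofReal (by linarith)]; ring
  · rw [max_eq_left h, max_eq_right (a := x - c) (by linarith)]
    rcases le_total c y with h' | h'
    · rw [max_eq_left (by linarith), ENNReal.toReal_ofReal (by linarith)]; ring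
    · rw [max_eq_right (by linarith), ENNReal.ofReal_of_nonpos (by linarith)]; simp

theorem step_integral (c x : ℝ) :
    ∫ u in (0:ℝ)..x, (if c < u then (1:ℝ) else 0) = max (x - c) 0 - max (-c) 0 := by
  rcases le_total 0 x with h | h
  · rw [step_integral_aux c 0 x h]; simp
  · rw [intervalIntegral.integral_symm, step_integral_aux c x 0 h]; simp

theorem sum_step_integrable {n : ℕ} (b : Fin n → ℝ) (ρ : Fin (n + 1) → ℝ)
    (x y : ℝ) : IntervalIntegrable
      (fun u => ∑ j : Fin n, (ρ j.succ - ρ j.castSucc) * (if b j < u then (1:ℝ) else 0))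
      volume x y := by
  have := IntervalIntegrable.sum (μ := volume) (a := x) (b := y) (Finset.univ : Finset (Fin n))
    (f := fun j u => (ρ j.succ - ρ j.castSucc) * (if b j < u then (1:ℝ) else 0))
    (fun j _ => ((step_mono (b j)).intervalIntegrable).const_mul _)
  have e : (fun u => ∑ j : Fin n, (ρ j.succ - ρ j.castSucc) * (if b j < u then (1:ℝ) else 0))
      = ∑ j : Fin n, fun u => (ρ j.succ - ρ j.castSucc) * (if b j < u then (1:ℝ) else 0) := by
    ext u; simp
  rw [e]; exact this

theorem slope_integrable {n : ℕ} {b : Fin n → ℝ} (hb : StrictMono b) (ρ : Fin (n + 1) → ℝ)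
    (x y : ℝ) : IntervalIntegrable (fun u => ρ (slopeIdx b u)) volume x y := by
  simp only [slope_formula hb ρ]
  exact (intervalIntegrable_const (c := ρ 0)).add (sum_step_integrable b ρ x y)

theorem plFun_formula {n : ℕ} {b : Fin n → ℝ} (hb : StrictMono b) (ρ : Fin (n + 1) → ℝ)
    (τ x : ℝ) : plFun b ρ τ x = τ + (ρ 0 * x +
      ∑ j : Fin n, (ρ j.succ - ρ j.castSucc) * (max (x - b j) 0 - max (-b j) 0)) := by
  unfold plFun
  congr 1
  simp only [slope_formula hb ρ]
  rw [intervalIntegral.integral_add intervalIntegrable_const]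
  · rw [intervalIntegral.integral_finsetSum]
    · congr 1
      · simp [mul_comm]
      · refine Finset.sum_congr rfl fun j _ => ?_
        rw [intervalIntegral.integral_const_mul, step_integral]
    · exact fun j _ => ((step_mono (b j)).intervalIntegrable).const_mul _
  · exact sum_step_integrable b ρ 0 x

theorem plFun_sub {n : ℕ} {b : Fin n → ℝ} (hb : StrictMono b) (ρ : Fin (n + 1) → ℝ)
    (τ x y : ℝ) : plFun b ρ τ y - plFun b ρ τ x = ∫ u in x..y, ρ (slopeIdx b u) := by
  unfold plFun
  have := intervalIntegral.integral_interval_sub_left (slope_integrable hb ρ 0 y)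
    (slope_integrable hb ρ 0 x)
  rw [← this]; ring

theorem plFun_lip {n : ℕ} {b : Fin n → ℝ} (hb : StrictMono b) (ρ : Fin (n + 1) → ℝ)
    (τ : ℝ) {M : ℝ} (hM : ∀ i, |ρ i| ≤ M) (x y : ℝ) :
    |plFun b ρ τ y - plFun b ρ τ x| ≤ M * |y - x| := by
  rw [plFun_sub hb]
  exact intervalIntegral.norm_integral_le_of_norm_le_const
    (f := fun u => ρ (slopeIdx b u)) fun u _ => hM (slopeIdx b u)

theorem plFun_linear {n : ℕ} {b : Fin n → ℝ} (hb : StrictMono b) (ρ : Fin (n + 1) → ℝ)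
    (τ : ℝ) (i : Fin (n + 1)) {x y : ℝ} (hxy : x ≤ y) (hi : ∀ u ∈ Ioc x y, slopeIdx b u = i) :
    plFun b ρ τ y - plFun b ρ τ x = ρ i * (y - x) := by
  rw [plFun_sub hb, intervalIntegral.integral_of_le hxy]
  have : ∫ u in Ioc x y, ρ (slopeIdx b u) = ∫ u in Ioc x y, ρ i :=
    setIntegral_congr_fun measurableSet_Ioc fun u hu => by simp only [hi u hu]
  rw [this, ← intervalIntegral.integral_of_le hxy]
  simp [mul_comm]

theorem plFun_continuous {n : ℕ} {b : Fin n → ℝ} (hb : StrictMono b) (ρ : Fin (n + 1) → ℝ)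
    (τ : ℝ) : Continuous (plFun b ρ τ) := by
  have : plFun b ρ τ = fun x => τ + (ρ 0 * x +
      ∑ j : Fin n, (ρ j.succ - ρ j.castSucc) * (max (x - b j) 0 - max (-b j) 0)) :=
    funext (plFun_formula hb ρ τ)
  rw [this]; fun_prop

/-- On any interval, some subinterval of proportional length is free of breaking points. -/
theorem plFun_lower {n : ℕ} {b : Fin n → ℝ} (hb : StrictMono b) (ρ : Fin (n + 1) → ℝ)
    (τ : ℝ) {r : ℝ} (hr : ∀ i, r ≤ |ρ i|) {x y : ℝ} (hxy : x ≤ y) :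
    ∃ x' ∈ Icc x y, ∃ y' ∈ Icc x y,
      r / (n + 1) * (y - x) ≤ |plFun b ρ τ y' - plFun b ρ τ x'| := by
  set e : ℝ := (y - x) / (n + 1) with he
  have hn : (0:ℝ) < n + 1 := by positivity
  have he0 : 0 ≤ e := div_nonneg (by linarith) hn.le
  have hen : (n + 1) * e = y - x := by rw [he]; field_simp
  obtain ⟨i, hi⟩ : ∃ i : Fin (n + 1), ∀ j : Fin n, ¬ (x + i * e ≤ b j ∧ b j < x + (i + 1) * e) := by
    by_contra hcon
    push Not at hcon
    choose g hg using hcon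
    obtain ⟨i, i', hne, heq⟩ := Fintype.exists_ne_map_eq_of_card_lt g (by simp)
    have key : ∀ i i' : Fin (n + 1), i < i' → g i ≠ g i' := by
      intro i i' hlt heq
      have h1 := hg i
      have h2 := hg i'
      rw [heq] at h1
      have : (i : ℝ) + 1 ≤ i' := by exact_mod_cast hlt
      nlinarith [h1.2, h2.1]
    rcases lt_or_gt_of_ne hne with h | h
    · exact key _ _ h heq
    · exact key _ _ h heq.symm
  have hi0 : (0:ℝ) ≤ i := by positivity
  have hi1 : (i : ℝ) + 1 ≤ n + 1 := by exact_mod_cast i.isLt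
  have hb1 : x ≤ x + i * e := by nlinarith
  have hb2 : x + i * e ≤ x + (i + 1) * e := by nlinarith
  have hb3 : x + (i + 1) * e ≤ y := by nlinarith
  refine ⟨x + i * e, ⟨hb1, by linarith⟩, x + (i + 1) * e, ⟨by linarith, hb3⟩, ?_⟩
  rw [plFun_linear hb ρ τ (slopeIdx b (x + (i + 1) * e)) hb2]
  · rw [abs_mul, show x + (i + 1) * e - (x + i * e) = e by ring, abs_of_nonneg he0]
    calc r / (n + 1) * (y - x) = r * e := by rw [he]; ring
      _ ≤ _ := mul_le_mul_of_nonneg_right (hr _) he0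
  · intro u hu
    apply Fin.ext
    show (Finset.univ.filter fun j : Fin n => b j < u).card
      = (Finset.univ.filter fun j : Fin n => b j < x + (i + 1) * e).card
    congr 1
    ext j
    simp only [Finset.mem_filter, Finset.mem_univ, true_and]
    constructor
    · intro h; exact lt_of_lt_of_le h hu.2
    · intro h
      by_contra hn
      exact hi j ⟨le_trans hu.1.le (not_lt.1 hn), h⟩

/-- Continuous dependence on parameters. -/
theorem plFun_close {n : ℕ} {b b' : Fin n → ℝ} (hb : StrictMono b) (hb' : StrictMono b')
    (ρ ρ' : Fin (n + 1) → ℝ) (τ τ' : ℝ) {d R : ℝ} (hbd : ∀ j, |b' j - b j| ≤ d)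
    (hρ : ∀ i, |ρ' i - ρ i| ≤ d) (hτ : |τ' - τ| ≤ d) (h1 : ∀ i, |ρ i| ≤ 1)
    {x : ℝ} (hx : |x| ≤ R) :
    |plFun b' ρ' τ' x - plFun b ρ τ x| ≤ d * (1 + R + n * (2 * R + 4)) := by
  have hd : 0 ≤ d := le_trans (abs_nonneg _) hτ
  rw [plFun_formula hb, plFun_formula hb']
  set A : Fin n → ℝ := fun j => max (x - b j) 0 - max (-b j) 0
  set A' : Fin n → ℝ := fun j => max (x - b' j) 0 - max (-b' j) 0
  have hA' : ∀ j, |A' j| ≤ R := fun j => by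
    have := abs_max_sub_max_le_abs (x - b' j) (-b' j) 0
    have h2 : x - b' j - -b' j = x := by ring
    rw [h2] at this
    exact this.trans hx
  have hAA : ∀ j, |A' j - A j| ≤ 2 * d := fun j => by
    have h1 := abs_max_sub_max_le_abs (x - b' j) (x - b j) 0
    have h2 := abs_max_sub_max_le_abs (-b' j) (-b j) 0
    have h3 := hbd j
    have e1 : |x - b' j - (x - b j)| = |b' j - b j| := by
      rw [show x - b' j - (x - b j) = -(b' j - b j) by ring, abs_neg]
    have e2 : |-b' j - -b j| = |b' j - b j| := by
      rw [show -b' j - -b j = -(b' j - b j) by ring, abs_neg]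
    rw [e1] at h1; rw [e2] at h2
    have : A' j - A j = (max (x - b' j) 0 - max (x - b j) 0) - (max (-b' j) 0 - max (-b j) 0) := by
      simp only [A, A']; ring
    rw [this]
    refine (abs_sub _ _).trans ?_
    linarith
  have hterm : ∀ j : Fin n, |(ρ' j.succ - ρ' j.castSucc) * A' j - (ρ j.succ - ρ j.castSucc) * A j|
      ≤ d * (2 * R + 4) := fun j => by
    have e : (ρ' j.succ - ρ' j.castSucc) * A' j - (ρ j.succ - ρ j.castSucc) * A j
        = ((ρ' j.succ - ρ j.succ) - (ρ' j.castSucc - ρ j.castSucc)) * A' j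
          + (ρ j.succ - ρ j.castSucc) * (A' j - A j) := by ring
    rw [e]
    refine (abs_add_le _ _).trans ?_
    rw [abs_mul, abs_mul]
    have i1 : |(ρ' j.succ - ρ j.succ) - (ρ' j.castSucc - ρ j.castSucc)| ≤ 2 * d :=
      (abs_sub _ _).trans (by linarith [hρ j.succ, hρ j.castSucc])
    have i2 : |ρ j.succ - ρ j.castSucc| ≤ 2 := (abs_sub _ _).trans (by linarith [h1 j.succ, h1 j.castSucc])
    have i3 := mul_le_mul i1 (hA' j) (abs_nonneg _) (by linarith)
    have i4 := mul_le_mul i2 (hAA j) (abs_nonneg _) (by linarith)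
    nlinarith
  have hsum : |∑ j, (ρ' j.succ - ρ' j.castSucc) * A' j - ∑ j, (ρ j.succ - ρ j.castSucc) * A j|
      ≤ n * (d * (2 * R + 4)) := by
    rw [← Finset.sum_sub_distrib]
    refine (Finset.abs_sum_le_sum_abs _ _).trans ?_
    refine (Finset.sum_le_sum fun j _ => hterm j).trans ?_
    simp
  have e : τ' + (ρ' 0 * x + ∑ j, (ρ' j.succ - ρ' j.castSucc) * A' j)
      - (τ + (ρ 0 * x + ∑ j, (ρ j.succ - ρ j.castSucc) * A j))
      = (τ' - τ) + ((ρ' 0 - ρ 0) * x + (∑ j, (ρ' j.succ - ρ' j.castSucc) * A' j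
        - ∑ j, (ρ j.succ - ρ j.castSucc) * A j)) := by ring
  rw [e]
  refine (abs_add_le _ _).trans ?_
  have k1 := abs_add_le ((ρ' 0 - ρ 0) * x) (∑ j, (ρ' j.succ - ρ' j.castSucc) * A' j
        - ∑ j, (ρ j.succ - ρ j.castSucc) * A j)
  rw [abs_mul] at k1
  have k2 := mul_le_mul (hρ 0) hx (abs_nonneg _) hd
  nlinarith

/-! ### Words and the use of "no exact overlapping" -/

theorem compFam_cons {ι : Type*} (S : ι → ℝ → ℝ) (k : ι) (w : List ι) (x : ℝ) :
    compFam S (k :: w) x = S k (compFam S w x) := rfl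

theorem compFam_append {ι : Type*} (S : ι → ℝ → ℝ) (u v : List ι) (x : ℝ) :
    compFam S (u ++ v) x = compFam S u (compFam S v x) := by
  induction u with
  | nil => rfl
  | cons q u ih =>
    change S q (compFam S (u ++ v) x) = S q (compFam S u (compFam S v x))
    rw [ih]

theorem compFam_affine {ι : Type*} (a c : ι → ℝ) (w : List ι) :
    ∃ A C : ℝ, ∀ x, compFam (fun q x => a q * x + c q) w x = A * x + C := by
  induction w with
  | nil => exact ⟨1, 0, fun x => by simp [compFam]⟩
  | cons q w ih =>
    obtain ⟨A, C, h⟩ := ih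
    refine ⟨a q * A, a q * C + c q, fun x => ?_⟩
    rw [compFam_cons, h]; ring

/-- Two different words of the same length cannot fix a common point (affine maps fixing a
common point commute). -/
theorem no_common_fixed_point {ι : Type*} (a c : ι → ℝ)
    (h : NoExactOverlap (fun q : ι => fun x => a q * x + c q))
    (i j : List ι) (hij : i.length = j.length) (x : ℝ)
    (hi : compFam (fun q x => a q * x + c q) i x = x)
    (hj : compFam (fun q x => a q * x + c q) j x = x) : i = j := by
  rcases Nat.eq_zero_or_pos i.length with h0 | hpos
  · have hi0 : i = [] := List.eq_nil_of_length_eq_zero h0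
    have hj0 : j = [] := List.eq_nil_of_length_eq_zero (by omega)
    rw [hi0, hj0]
  obtain ⟨A, C, hA⟩ := compFam_affine a c i
  obtain ⟨B, D, hB⟩ := compFam_affine a c j
  have key : compFam (fun q x => a q * x + c q) (i ++ j)
      = compFam (fun q x => a q * x + c q) (j ++ i) := by
    funext y
    rw [compFam_append, compFam_append]
    rw [hA] at hi
    rw [hB] at hj
    simp only [hA, hB]
    have hC : C = x - A * x := by linarith
    have hD : D = x - B * x := by linarith
    rw [hC, hD]; ring
  have hlen : (j ++ i).length = (i ++ j).length := by simp [Nat.add_comm]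
  have e := h (i ++ j).length (by rw [List.length_append]; omega) (fun t => (i ++ j).get t)
    (fun t => (j ++ i).get (Fin.cast hlen.symm t)) ?_
  · have e2 : i ++ j = j ++ i := by
      apply List.ext_get hlen.symm
      intro n h1 h2
      exact congrFun e ⟨n, h1⟩
    exact (List.append_inj e2 hij).1
  · have e1 : List.ofFn (fun t => (i ++ j).get t) = i ++ j := List.ofFn_get _
    have e2 : List.ofFn (fun t => (j ++ i).get (Fin.cast hlen.symm t)) = j ++ i := by
      apply List.ext_get
      · simp [Nat.add_comm]
      · intro n h1 h2; simp
    rw [e1, e2]; exact key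

/-- Counting hits: if two hits are separated by at least `N` letters, there are at most
`length / N + 1` of them. -/
def cntP {ι : Type*} (P : List ι → Prop) : List ι → ℕ
  | [] => 0
  | k :: w => cntP P w + (haveI := Classical.propDecidable (P (k :: w)); if P (k :: w) then 1 else 0)

theorem cntP_cons_pos {ι : Type*} (P : List ι → Prop) (k : ι) (w : List ι) (h : P (k :: w)) :
    cntP P (k :: w) = cntP P w + 1 := by
  simp [cntP, h]

theorem cntP_cons_neg {ι : Type*} (P : List ι → Prop) (k : ι) (w : List ι) (h : ¬ P (k :: w)) :
    cntP P (k :: w) = cntP P w := by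
  simp [cntP, h]

theorem cntP_bound {ι : Type*} (P : List ι → Prop) (N : ℕ)
    (hP : ∀ u v : List ι, v ≠ [] → P u → P (v ++ u) → N ≤ v.length) (w : List ι) :
    cntP P w * N ≤ w.length + N := by
  have key : cntP P w = 0 ∨ ∃ u v, w = v ++ u ∧ P u ∧ cntP P w * N ≤ u.length + N := by
    induction w with
    | nil => left; rfl
    | cons k w ih =>
      by_cases hk : P (k :: w)
      · right
        refine ⟨k :: w, [], rfl, hk, ?_⟩
        rw [cntP_cons_pos P k w hk]
        rcases ih with h0 | ⟨u, v, hw, hu, hc⟩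
        · rw [h0]; simp
        · have := hP u (k :: v) (by simp) hu (by rw [List.cons_append, ← hw]; exact hk)
          simp only [hw, List.length_cons, List.length_append] at *
          rw [Nat.add_mul]; omega
      · rw [cntP_cons_neg P k w hk]
        rcases ih with h0 | ⟨u, v, hw, hu, hc⟩
        · left; exact h0
        · right; exact ⟨u, k :: v, by rw [List.cons_append, ← hw], hu, hc⟩
  rcases key with h0 | ⟨u, v, hw, hu, hc⟩
  · rw [h0]; simp
  · rw [hw] at hc ⊢; rw [List.length_append]; omega

theorem cntP_exists_le {ι κ : Type*} [Fintype κ] (P : κ → List ι → Prop) (w : List ι) :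
    cntP (fun l => ∃ q, P q l) w ≤ ∑ q, cntP (P q) w := by
  induction w with
  | nil => simp [cntP]
  | cons k w ih =>
    have hmono : ∀ q, cntP (P q) w ≤ cntP (P q) (k :: w) := fun q => by simp [cntP]
    by_cases h : ∃ q, P q (k :: w)
    · rw [cntP_cons_pos _ k w h]
      obtain ⟨q, hq⟩ := h
      have : ∑ q, cntP (P q) w < ∑ q, cntP (P q) (k :: w) :=
        Finset.sum_lt_sum (fun q _ => hmono q) ⟨q, Finset.mem_univ q, by
          rw [cntP_cons_pos _ k w hq]; omega⟩
      omega
    · rw [cntP_cons_neg _ k w h]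
      exact ih.trans (Finset.sum_le_sum fun q _ => hmono q)

section Lift
variable {m l}

/-- Left limits: the map agrees at `x` with the affine branch of index `slopeIdx x`. -/
theorem branch_left {p : Param m l} (hp : p ∈ Gamma m l)
    {t : (k : Fin m) → Fin (l k + 1) → ℝ}
    (ht : ∀ (k : Fin m) (i : Fin (l k + 1)) (x : ℝ),
        (∀ j : Fin (l k), (j : ℕ) < (i : ℕ) → p.1 k j < x) →
        (∀ j : Fin (l k), (i : ℕ) ≤ (j : ℕ) → x < p.1 k j) →
        paramFun m l p k x = p.2.2 k i * x + t k i) (k : Fin m) (x : ℝ) :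
    paramFun m l p k x = p.2.2 k (slopeIdx (p.1 k) x) * x + t k (slopeIdx (p.1 k) x) := by
  have hc : Continuous (paramFun m l p k) := plFun_continuous (hp.1 k) _ _
  set i := slopeIdx (p.1 k) x with hi
  have h1 : ∀ᶠ y in nhdsWithin x (Iio x), ∀ j : Fin (l k), (j : ℕ) < (i : ℕ) → p.1 k j < y := by
    rw [eventually_all]
    intro j
    by_cases hj : (j : ℕ) < (i : ℕ)
    · have : p.1 k j < x := (slopeIdx_lt_iff (hp.1 k) x j).2 hj
      filter_upwards [mem_nhdsWithin_of_mem_nhds (lt_mem_nhds this)] with y hy _ using hy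
    · exact Eventually.of_forall fun y h => absurd h hj
  have h2 : ∀ᶠ y in nhdsWithin x (Iio x), paramFun m l p k y = p.2.2 k i * y + t k i := by
    filter_upwards [h1, self_mem_nhdsWithin] with y hy hyx
    refine ht k i y hy fun j hj => ?_
    have : ¬ p.1 k j < x := fun h => by
      have := (slopeIdx_lt_iff (hp.1 k) x j).1 h
      omega
    exact lt_of_lt_of_le hyx (not_lt.1 this)
  have l1 : Tendsto (paramFun m l p k) (nhdsWithin x (Iio x)) (nhds (paramFun m l p k x)) :=
    hc.continuousAt.tendsto.mono_left nhdsWithin_le_nhds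
  have l2 : Tendsto (fun y => p.2.2 k i * y + t k i) (nhdsWithin x (Iio x))
      (nhds (p.2.2 k i * x + t k i)) :=
    ((by fun_prop : Continuous fun y => p.2.2 k i * y + t k i).continuousAt.tendsto).mono_left
      nhdsWithin_le_nhds
  exact tendsto_nhds_unique (l1.congr' h2) l2

theorem branch_break {p : Param m l} (hp : p ∈ Gamma m l)
    {t : (k : Fin m) → Fin (l k + 1) → ℝ}
    (ht : ∀ (k : Fin m) (i : Fin (l k + 1)) (x : ℝ),
        (∀ j : Fin (l k), (j : ℕ) < (i : ℕ) → p.1 k j < x) →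
        (∀ j : Fin (l k), (i : ℕ) ≤ (j : ℕ) → x < p.1 k j) →
        paramFun m l p k x = p.2.2 k i * x + t k i) (k : Fin m) (j : Fin (l k)) :
    paramFun m l p k (p.1 k j) = p.2.2 k j.castSucc * p.1 k j + t k j.castSucc ∧
    paramFun m l p k (p.1 k j) = p.2.2 k j.succ * p.1 k j + t k j.succ := by
  have hc : Continuous (paramFun m l p k) := plFun_continuous (hp.1 k) _ _
  set x := p.1 k j with hx
  constructor
  · have := branch_left hp ht k x
    have hi : slopeIdx (p.1 k) x = j.castSucc := by
      apply Fin.ext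
      have h1 := fun j' => slopeIdx_lt_iff (hp.1 k) x j'
      have h2 : ∀ j' : Fin (l k), (j' : ℕ) < (slopeIdx (p.1 k) x : ℕ) ↔ j' < j := fun j' => by
        rw [← h1, hx, (hp.1 k).lt_iff_lt]
      have h3 := (slopeIdx (p.1 k) x).isLt
      have hj := j.isLt
      simp only [Fin.val_castSucc]
      have h4 := h2 j
      simp only [lt_irrefl, iff_false, not_lt] at h4
      by_contra hne
      have h5 : (slopeIdx (p.1 k) x : ℕ) < j := by omega
      have := (h2 ⟨(slopeIdx (p.1 k) x : ℕ), by omega⟩).2 h5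
      simp at this
    rw [hi] at this; exact this
  · have h1 : ∀ᶠ y in nhdsWithin x (Ioi x), ∀ j' : Fin (l k), (j : ℕ) + 1 ≤ (j' : ℕ) → y < p.1 k j' := by
      rw [eventually_all]
      intro j'
      by_cases hj : (j : ℕ) + 1 ≤ (j' : ℕ)
      · have : x < p.1 k j' := (hp.1 k) (show j < j' from hj)
        filter_upwards [mem_nhdsWithin_of_mem_nhds (gt_mem_nhds this)] with y hy _ using hy
      · exact Eventually.of_forall fun y h => absurd h hj
    have h2 : ∀ᶠ y in nhdsWithin x (Ioi x),
        paramFun m l p k y = p.2.2 k j.succ * y + t k j.succ := by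
      filter_upwards [h1, self_mem_nhdsWithin] with y hy hyx
      refine ht k j.succ y (fun j' hj' => ?_) (fun j' hj' => hy j' (by simpa using hj'))
      have : j' ≤ j := by
        rw [Fin.val_succ] at hj'
        exact Fin.le_def.2 (by omega)
      exact lt_of_le_of_lt ((hp.1 k).monotone this) hyx
    have l1 : Tendsto (paramFun m l p k) (nhdsWithin x (Ioi x)) (nhds (paramFun m l p k x)) :=
      hc.continuousAt.tendsto.mono_left nhdsWithin_le_nhds
    have l2 : Tendsto (fun y => p.2.2 k j.succ * y + t k j.succ) (nhdsWithin x (Ioi x))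
        (nhds (p.2.2 k j.succ * x + t k j.succ)) :=
      ((by fun_prop : Continuous fun y => p.2.2 k j.succ * y
        + t k j.succ).continuousAt.tendsto).mono_left nhdsWithin_le_nhds
    exact tendsto_nhds_unique (l1.congr' h2) l2

theorem lift_word {p : Param m l} (hp : p ∈ Gamma m l)
    {t : (k : Fin m) → Fin (l k + 1) → ℝ}
    (ht : ∀ (k : Fin m) (i : Fin (l k + 1)) (x : ℝ),
        (∀ j : Fin (l k), (j : ℕ) < (i : ℕ) → p.1 k j < x) →
        (∀ j : Fin (l k), (i : ℕ) ≤ (j : ℕ) → x < p.1 k j) →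
        paramFun m l p k x = p.2.2 k i * x + t k i) (w : List (Fin m)) (x : ℝ) :
    ∃ q : List (Σ k : Fin m, Fin (l k + 1)), q.length = w.length ∧
      compFam (fun q : Σ k : Fin m, Fin (l k + 1) => fun x => p.2.2 q.1 q.2 * x + t q.1 q.2) q x
        = compFam (paramFun m l p) w x := by
  induction w with
  | nil => exact ⟨[], rfl, rfl⟩
  | cons k w ih =>
    obtain ⟨q, hq, hx⟩ := ih
    refine ⟨⟨k, slopeIdx (p.1 k) (compFam (paramFun m l p) w x)⟩ :: q, by simp [hq], ?_⟩
    rw [compFam_cons, compFam_cons, hx, branch_left hp ht k]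

/-- A breaking point never returns to itself. -/
theorem no_return {p : Param m l} (hp : p ∈ Gamma m l)
    (hno : ∃ t : (k : Fin m) → Fin (l k + 1) → ℝ,
      (∀ (k : Fin m) (i : Fin (l k + 1)) (x : ℝ),
        (∀ j : Fin (l k), (j : ℕ) < (i : ℕ) → p.1 k j < x) →
        (∀ j : Fin (l k), (i : ℕ) ≤ (j : ℕ) → x < p.1 k j) →
        paramFun m l p k x = p.2.2 k i * x + t k i) ∧
      NoExactOverlap (fun q : Σ k : Fin m, Fin (l k + 1) =>
        fun x => p.2.2 q.1 q.2 * x + t q.1 q.2))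
    (k : Fin m) (j : Fin (l k)) (v : List (Fin m)) :
    compFam (paramFun m l p) (v ++ [k]) (p.1 k j) ≠ p.1 k j := by
  obtain ⟨t, ht, hov⟩ := hno
  intro h
  rw [compFam_append] at h
  have h0 : compFam (paramFun m l p) [k] (p.1 k j) = paramFun m l p k (p.1 k j) := rfl
  rw [h0] at h
  obtain ⟨q, hq, hx⟩ := lift_word hp ht v (paramFun m l p k (p.1 k j))
  rw [h] at hx
  obtain ⟨e1, e2⟩ := branch_break hp ht k j
  have := no_common_fixed_point (fun q : Σ k : Fin m, Fin (l k + 1) => p.2.2 q.1 q.2)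
    (fun q => t q.1 q.2) hov (q ++ [⟨k, j.castSucc⟩]) (q ++ [⟨k, j.succ⟩]) (by simp) (p.1 k j)
    (by
      rw [compFam_append]
      change compFam _ q (p.2.2 k j.castSucc * p.1 k j + t k j.castSucc) = _
      rw [← e1]; exact hx)
    (by
      rw [compFam_append]
      change compFam _ q (p.2.2 k j.succ * p.1 k j + t k j.succ) = _
      rw [← e2]; exact hx)
  simp only [List.append_cancel_left_eq, List.cons.injEq, and_true] at this
  have h3 := eq_of_heq (Sigma.mk.inj this).2
  have h4 := congrArg Fin.val h3
  simp at h4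

theorem no_common {p : Param m l} (hm : 2 ≤ m) (hp : p ∈ Gamma m l)
    (hno : ∃ t : (k : Fin m) → Fin (l k + 1) → ℝ,
      (∀ (k : Fin m) (i : Fin (l k + 1)) (x : ℝ),
        (∀ j : Fin (l k), (j : ℕ) < (i : ℕ) → p.1 k j < x) →
        (∀ j : Fin (l k), (i : ℕ) ≤ (j : ℕ) → x < p.1 k j) →
        paramFun m l p k x = p.2.2 k i * x + t k i) ∧
      NoExactOverlap (fun q : Σ k : Fin m, Fin (l k + 1) =>
        fun x => p.2.2 q.1 q.2 * x + t q.1 q.2)) (x : ℝ) :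
    ¬ (paramFun m l p ⟨0, by omega⟩ x = x ∧ paramFun m l p ⟨1, by omega⟩ x = x) := by
  obtain ⟨t, ht, hov⟩ := hno
  rintro ⟨h0, h1⟩
  rw [branch_left hp ht] at h0 h1
  have := no_common_fixed_point (fun q : Σ k : Fin m, Fin (l k + 1) => p.2.2 q.1 q.2)
    (fun q => t q.1 q.2) hov [⟨_, _⟩] [⟨_, _⟩] (by simp) x h0 h1
  simp only [List.cons.injEq, and_true] at this
  have h3 := congrArg Fin.val (Sigma.mk.inj this).1
  simp at h3

end Lift

/-! ### Intervals and images -/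

theorem compFam_image_cons {ι : Type*} (S : ι → ℝ → ℝ) (k : ι) (w : List ι) (D : Set ℝ) :
    compFam S (k :: w) '' D = S k '' (compFam S w '' D) := by
  rw [← image_comp]; rfl

theorem image_Icc_exists {f : ℝ → ℝ} (hf : Continuous f) {a b : ℝ} (hab : a ≤ b) :
    ∃ a' b', a' ≤ b' ∧ f '' Icc a b = Icc a' b' := by
  have h := hf.continuousOn.image_Icc hab
  refine ⟨_, _, ?_, h⟩
  by_contra hlt
  rw [Icc_eq_empty hlt] at h
  exact (Set.Nonempty.image f (nonempty_Icc.2 hab)).ne_empty h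

theorem compFam_image_Icc {ι : Type*} {S : ι → ℝ → ℝ} (hS : ∀ k, Continuous (S k))
    {a b : ℝ} (hab : a ≤ b) (w : List ι) :
    ∃ a' b', a' ≤ b' ∧ compFam S w '' Icc a b = Icc a' b' := by
  induction w with
  | nil => exact ⟨a, b, hab, by simp [compFam]⟩
  | cons k w ih =>
    obtain ⟨a', b', h1, h2⟩ := ih
    obtain ⟨a'', b'', h3, h4⟩ := image_Icc_exists (hS k) h1
    exact ⟨a'', b'', h3, by rw [compFam_image_cons, h2, h4]⟩

theorem diam_image_le {f : ℝ → ℝ} {M a b : ℝ} (hM : 0 ≤ M) (hab : a ≤ b)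
    (hf : ∀ x ∈ Icc a b, ∀ y ∈ Icc a b, |f y - f x| ≤ M * |y - x|) :
    Metric.diam (f '' Icc a b) ≤ M * (b - a) := by
  apply Metric.diam_le_of_forall_dist_le (mul_nonneg hM (by linarith))
  rintro _ ⟨x, hx, rfl⟩ _ ⟨y, hy, rfl⟩
  rw [Real.dist_eq]
  refine (hf y hy x hx).trans (mul_le_mul_of_nonneg_left ?_ hM)
  rw [abs_le]; constructor <;> linarith [hx.1, hx.2, hy.1, hy.2]

theorem le_diam_image {f : ℝ → ℝ} (hf : Continuous f) {a b x y : ℝ}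
    (hx : x ∈ Icc a b) (hy : y ∈ Icc a b) :
    |f y - f x| ≤ Metric.diam (f '' Icc a b) := by
  rw [← Real.dist_eq]
  exact Metric.dist_le_diam_of_mem (isCompact_Icc.image hf).isBounded
    (mem_image_of_mem f hy) (mem_image_of_mem f hx)

theorem clamp_mem {a b : ℝ} (hab : a ≤ b) (x : ℝ) : max a (min b x) ∈ Icc a b :=
  ⟨le_max_left _ _, max_le hab (min_le_left _ _)⟩

theorem clamp_near {a b : ℝ} (hab : a ≤ b) (x v : ℝ) (hv : v ∈ Icc a b) :
    |x - max a (min b x)| ≤ |x - v| := by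
  obtain ⟨h1, h2⟩ := hv
  rcases le_total b x with h | h
  · rw [min_eq_left h, max_eq_right hab, abs_of_nonneg (by linarith), abs_of_nonneg (by linarith)]
    linarith
  · rw [min_eq_right h]
    rcases le_total a x with h' | h'
    · rw [max_eq_right h']; simp
    · rw [max_eq_left h', abs_of_nonpos (by linarith), abs_of_nonpos (by linarith)]
      linarith

/-- A point almost fixed by a contraction is close to any interval which the contraction
almost preserves. -/
theorem fixed_near {g f : ℝ → ℝ} {ρ δ a b φ : ℝ} (hab : a ≤ b)
    (hg : ∀ x y, |g y - g x| ≤ ρ * |y - x|) (hφ : g φ = φ)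
    (hinv : ∀ x ∈ Icc a b, f x ∈ Icc a b) (hc : ∀ x ∈ Icc a b, |g x - f x| ≤ δ) :
    ∃ u ∈ Icc a b, (1 - ρ) * |φ - u| ≤ δ := by
  set u := max a (min b φ) with hu
  have hum : u ∈ Icc a b := clamp_mem hab φ
  refine ⟨u, hum, ?_⟩
  have h1 := clamp_near hab φ (f u) (hinv u hum)
  have h2 := hg u φ
  rw [hφ] at h2
  have h3 := hc u hum
  have h4 : |φ - f u| ≤ |φ - g u| + |g u - f u| := abs_sub_le _ _ _
  linarith

/-- Basic facts on the supporting interval. -/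
theorem suppInt_spec {m : ℕ} (hm : 0 < m) {f : Fin m → ℝ → ℝ} {ρ : ℝ} (hρ0 : 0 ≤ ρ) (hρ : ρ < 1)
    (hf : ∀ k x y, |f k y - f k x| ≤ ρ * |y - x|) :
    ∃ a b, a < b ∧ suppInt f = Icc a b ∧ (∀ k, ∀ x ∈ Icc a b, f k x ∈ Icc a b) ∧
      ((∃ φ, (∀ k, f k φ = φ) ∧ a = φ - 1 / 2 ∧ b = φ + 1 / 2) ∨
       (∀ a' b', a' ≤ b' → (∀ k, ∀ x ∈ Icc a' b', f k x ∈ Icc a' b') → Icc a b ⊆ Icc a' b')) := by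
  by_cases h : ∃ φ : ℝ, ∀ k, f k φ = φ
  · refine ⟨h.choose - 1 / 2, h.choose + 1 / 2, by linarith, by simp only [suppInt, dif_pos h], ?_,
      Or.inl ⟨h.choose, h.choose_spec, rfl, rfl⟩⟩
    intro k x hx
    have h1 := hf k h.choose x
    rw [h.choose_spec k] at h1
    have h2 : |x - h.choose| ≤ 1 / 2 := by
      rw [abs_le]; constructor <;> linarith [hx.1, hx.2]
    have h3 : |f k x - h.choose| ≤ 1 / 2 := by nlinarith [abs_nonneg (x - h.choose)]
    rw [abs_le] at h3
    constructor <;> linarith [h3.1, h3.2]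
  · set 𝒥 := {J : Set ℝ | J.Nonempty ∧ (∃ a b : ℝ, J = Set.Icc a b) ∧ ∀ k, f k '' J ⊆ J} with h𝒥
    have hS : suppInt f = ⋂₀ 𝒥 := by simp only [suppInt, dif_neg h, h𝒥]
    have hfl : LipschitzWith ⟨ρ, hρ0⟩ (f ⟨0, hm⟩) :=
      LipschitzWith.of_dist_le_mul fun x y => by
        rw [Real.dist_eq, Real.dist_eq]; exact hf _ y x
    have hcw : ContractingWith ⟨ρ, hρ0⟩ (f ⟨0, hm⟩) := ⟨by exact_mod_cast hρ, hfl⟩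
    set φ := hcw.fixedPoint (f ⟨0, hm⟩) with hφ
    have hφf : f ⟨0, hm⟩ φ = φ := hcw.fixedPoint_isFixedPt
    have hne : φ ∈ ⋂₀ 𝒥 := by
      rintro J ⟨hJ, ⟨a, b, rfl⟩, hinv⟩
      obtain ⟨u, hu, h1⟩ := fixed_near (f := f ⟨0, hm⟩) (δ := 0) (nonempty_Icc.1 hJ) (hf ⟨0, hm⟩) hφf
        (fun x hx => hinv _ (mem_image_of_mem _ hx)) (fun x _ => by simp)
      have : |φ - u| = 0 := by
        have := abs_nonneg (φ - u)
        nlinarith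
      rw [abs_eq_zero, sub_eq_zero] at this
      rw [this]; exact hu
    obtain ⟨R, hR⟩ : ∃ R : ℝ, ∀ k, |f k 0| ≤ R := by
      obtain ⟨R, hR⟩ := (Set.finite_range fun k => |f k 0|).bddAbove
      exact ⟨R, fun k => hR ⟨k, rfl⟩⟩
    have hR0 : 0 ≤ R := (abs_nonneg _).trans (hR ⟨0, hm⟩)
    have hbig : Icc (-(R / (1 - ρ))) (R / (1 - ρ)) ∈ 𝒥 := by
      have h0 : 0 < 1 - ρ := by linarith
      have h1 : 0 ≤ R / (1 - ρ) := by positivity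
      have h2 : (1 - ρ) * (R / (1 - ρ)) = R := by field_simp
      refine ⟨nonempty_Icc.2 (by linarith), ⟨_, _, rfl⟩, ?_⟩
      rintro k _ ⟨x, hx, rfl⟩
      have h3 := hf k 0 x
      have h4 : |x - 0| ≤ R / (1 - ρ) := by
        rw [sub_zero, abs_le]; exact ⟨hx.1, hx.2⟩
      have h5 : |f k x| ≤ |f k x - f k 0| + |f k 0| := by
        have := abs_sub_abs_le_abs_sub (f k x) (f k 0); linarith
      have h6 := hR k
      have h7 : |f k x| ≤ R / (1 - ρ) := by nlinarith
      rw [abs_le] at h7; exact ⟨h7.1, h7.2⟩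
    have hclosed : IsClosed (⋂₀ 𝒥) := isClosed_sInter (by
      rintro J ⟨_, ⟨a, b, rfl⟩, _⟩; exact isClosed_Icc)
    have hcpt : IsCompact (⋂₀ 𝒥) :=
      isCompact_Icc.of_isClosed_subset hclosed (sInter_subset_of_mem hbig)
    have hord : OrdConnected (⋂₀ 𝒥) := ordConnected_sInter (by
      rintro J ⟨_, ⟨a, b, rfl⟩, _⟩; exact ordConnected_Icc)
    have hIcc := eq_Icc_of_connected_compact ⟨⟨φ, hne⟩, hord.isPreconnected⟩ hcpt
    set a := sInf (⋂₀ 𝒥)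
    set b := sSup (⋂₀ 𝒥)
    have hinv : ∀ k, ∀ x ∈ Icc a b, f k x ∈ Icc a b := by
      rw [← hIcc]
      intro k x hx J hJ
      exact hJ.2.2 k (mem_image_of_mem _ (hx J hJ))
    have hab : a ≤ b := by
      rw [hIcc] at hne; exact hne.1.trans hne.2
    refine ⟨a, b, lt_of_le_of_ne hab ?_, by rw [hS, hIcc], hinv, Or.inr ?_⟩
    · intro he
      refine h ⟨a, fun k => ?_⟩
      have := hinv k a ⟨le_rfl, hab⟩
      rw [← he] at this
      exact le_antisymm this.2 this.1
    · intro a' b' h1 h2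
      rw [← hIcc]
      apply sInter_subset_of_mem
      exact ⟨nonempty_Icc.2 h1, ⟨_, _, rfl⟩, fun k => by rintro _ ⟨x, hx, rfl⟩; exact h2 k x hx⟩

theorem compFam_mem {ι : Type*} {f : ι → ℝ → ℝ} {D : Set ℝ} (hf : ∀ k, ∀ x ∈ D, f k x ∈ D)
    (w : List ι) {x : ℝ} (hx : x ∈ D) : compFam f w x ∈ D := by
  induction w with
  | nil => exact hx
  | cons k w ih => exact hf k _ ih

theorem shadow {ι : Type*} {f g : ι → ℝ → ℝ} {ρ δ x0 : ℝ} {D : Set ℝ} (hρ0 : 0 ≤ ρ) (hρ : ρ < 1)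
    (hδ : 0 ≤ δ)
    (hg : ∀ k x y, |g k y - g k x| ≤ ρ * |y - x|) (hf : ∀ k, ∀ x ∈ D, f k x ∈ D) (hx0 : x0 ∈ D)
    (hc : ∀ k, ∀ x ∈ D, |g k x - f k x| ≤ δ) (w : List ι) (x : ℝ) :
    |compFam g w x - compFam f w x0| ≤ ρ ^ w.length * |x - x0| + δ / (1 - ρ) := by
  have h0 : 0 < 1 - ρ := by linarith
  induction w with
  | nil =>
    have : 0 ≤ δ / (1 - ρ) := by positivity
    simp [compFam, this]
  | cons k w ih =>
    rw [compFam_cons, compFam_cons, List.length_cons, pow_succ]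
    set z := compFam f w x0
    have h1 := hg k z (compFam g w x)
    have h2 := hc k z (compFam_mem hf w hx0)
    have h3 := abs_sub_le (g k (compFam g w x)) (g k z) (f k z)
    have h4 := mul_le_mul_of_nonneg_left ih hρ0
    have h5 : δ / (1 - ρ) = ρ * (δ / (1 - ρ)) + δ := by field_simp; ring
    rw [h5]
    nlinarith

/-! ### Word-by-word comparison -/

section Compare
variable {m l}

theorem paramFun_continuous {p : Param m l} (hp : p ∈ Gamma m l) (k : Fin m) :
    Continuous (paramFun m l p k) := plFun_continuous (hp.1 k) _ _

/-- The hitting events. -/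
def hitP (p : Param m l) (x0 η : ℝ) (q0 : ℕ) :
    Option (Σ k : Fin m, Fin (l k)) → List (Fin m) → Prop
  | none, u => u.length ≤ q0
  | some q, u => ∃ w, u = q.1 :: w ∧ |compFam (paramFun m l p) w x0 - p.1 q.1 q.2| ≤ 2 * η

theorem slopeIdx_stable {n : ℕ} {b b' : Fin n → ℝ} {η y u : ℝ} (hb : ∀ j, |b' j - b j| ≤ η)
    (hy : ∀ j, 2 * η < |y - b j|) (hu : |u - y| ≤ η) : slopeIdx b' u = slopeIdx b y := by
  apply Fin.ext
  change (Finset.univ.filter fun j : Fin n => b' j < u).card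
    = (Finset.univ.filter fun j : Fin n => b j < y).card
  congr 1
  apply Finset.filter_congr
  intro j _
  have h1 := hb j
  have h2 := hy j
  rw [abs_le] at h1 hu
  rcases lt_abs.1 h2 with h | h
  · exact ⟨fun _ => by linarith, fun _ => by linarith [h1.1, h1.2, hu.1, hu.2]⟩
  · exact ⟨fun _ => by linarith [h1.1, h1.2, hu.1, hu.2],
      fun _ => by linarith [h1.1, h1.2, hu.1, hu.2]⟩

theorem plFun_diam_linear {n : ℕ} {b : Fin n → ℝ} (hb : StrictMono b) (ρ : Fin (n + 1) → ℝ)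
    (τ : ℝ) (i : Fin (n + 1)) {x y : ℝ} (hxy : x ≤ y) (hi : ∀ u ∈ Icc x y, slopeIdx b u = i) :
    Metric.diam (plFun b ρ τ '' Icc x y) = |ρ i| * (y - x) := by
  have key : ∀ s ∈ Icc x y, ∀ t ∈ Icc x y, s ≤ t →
      |plFun b ρ τ t - plFun b ρ τ s| = |ρ i| * |t - s| := by
    intro s hs t ht hst
    rw [plFun_linear hb ρ τ i hst fun u hu => hi u ⟨hs.1.trans hu.1.le, hu.2.trans ht.2⟩, abs_mul]
  apply le_antisymm
  · apply diam_image_le (abs_nonneg _) hxy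
    intro s hs t ht
    rcases le_total s t with h | h
    · exact (key s hs t ht h).le
    · rw [abs_sub_comm, abs_sub_comm t s]; exact (key t ht s hs h).le
  · have := key x ⟨le_rfl, hxy⟩ y ⟨hxy, le_rfl⟩ hxy
    rw [abs_of_nonneg (by linarith : 0 ≤ y - x)] at this
    rw [← this]
    exact le_diam_image (plFun_continuous hb ρ τ) ⟨le_rfl, hxy⟩ ⟨hxy, le_rfl⟩

theorem plFun_diam_lower {n : ℕ} {b : Fin n → ℝ} (hb : StrictMono b) (ρ : Fin (n + 1) → ℝ)
    (τ : ℝ) {r c : ℝ} (hr : ∀ i, r ≤ |ρ i|) (hc : c ≤ r / (n + 1)) {x y : ℝ} (hxy : x ≤ y) :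
    c * (y - x) ≤ Metric.diam (plFun b ρ τ '' Icc x y) := by
  obtain ⟨x', hx', y', hy', h⟩ := plFun_lower hb ρ τ hr hxy
  have h1 := le_diam_image (plFun_continuous hb ρ τ) hx' hy'
  have h2 := mul_le_mul_of_nonneg_right hc (by linarith : 0 ≤ y - x)
  linarith

theorem compare {p q q' : Param m l} (hq : q ∈ Gamma m l) (hq' : q' ∈ Gamma m l)
    {η θ c r x0 a b a' b' : ℝ} {q0 : ℕ}
    (hη : ∀ k j, |q.1 k j - p.1 k j| ≤ η) (hη' : ∀ k j, |q'.1 k j - p.1 k j| ≤ η)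
    (hθ0 : 0 < θ) (hθ1 : θ ≤ 1) (hc0 : 0 < c)
    (hθ : ∀ k i, θ * |q.2.2 k i| ≤ |q'.2.2 k i|)
    (hr : ∀ k i, r ≤ |q'.2.2 k i|) (hc : ∀ k, c ≤ r / (l k + 1))
    (hab : a < b) (hab' : a' < b')
    (h1 : ∀ w : List (Fin m), q0 ≤ w.length → ∀ x ∈ Icc a b,
      |compFam (paramFun m l q) w x - compFam (paramFun m l p) w x0| ≤ η)
    (h2 : ∀ w : List (Fin m), q0 ≤ w.length → ∀ x ∈ Icc a' b',
      |compFam (paramFun m l q') w x - compFam (paramFun m l p) w x0| ≤ η) (w : List (Fin m)) :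
    Metric.diam (compFam (paramFun m l q) w '' Icc a b) *
      (θ ^ w.length * c ^ cntP (fun u => ∃ o, hitP p x0 η q0 o u) w * (b' - a')) ≤
    Metric.diam (compFam (paramFun m l q') w '' Icc a' b') * (b - a) := by
  induction w with
  | nil =>
    simp only [compFam, cntP, List.foldr_nil, image_id, List.length_nil, pow_zero, one_mul,
      Real.diam_Icc hab.le, Real.diam_Icc hab'.le]
    linarith
  | cons k w ih =>
    obtain ⟨d, e, hde, hD⟩ := compFam_image_Icc (paramFun_continuous hq) hab.le w
    obtain ⟨d', e', hde', hE⟩ := compFam_image_Icc (paramFun_continuous hq') hab'.le w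
    rw [compFam_image_cons, compFam_image_cons, hD, hE, List.length_cons, pow_succ]
    rw [hD, hE, Real.diam_Icc hde, Real.diam_Icc hde'] at ih
    set P : List (Fin m) → Prop := fun u => ∃ o, hitP p x0 η q0 o u with hP
    have hba : 0 < b - a := by linarith
    have hT : 0 ≤ θ ^ w.length * c ^ cntP P w * (b' - a') :=
      mul_nonneg (by positivity) (by linarith)
    by_cases hk : P (k :: w)
    · rw [cntP_cons_pos P k w hk, pow_succ]
      have u1 : Metric.diam (paramFun m l q k '' Icc d e) ≤ 1 * (e - d) :=
        diam_image_le zero_le_one hde fun x _ y _ =>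
          plFun_lip (hq.1 k) _ _ (fun i => (hq.2.1 k i).2.le) x y
      have u2 : c * (e' - d') ≤ Metric.diam (paramFun m l q' k '' Icc d' e') :=
        plFun_diam_lower (hq'.1 k) _ _ (hr k) (hc k) hde'
      calc _ = Metric.diam (paramFun m l q k '' Icc d e) * (θ ^ w.length * c ^ cntP P w * (b' - a'))
            * (θ * c) := by ring
        _ ≤ (1 * (e - d)) * (θ ^ w.length * c ^ cntP P w * (b' - a')) * (1 * c) := by gcongr
        _ = ((e - d) * (θ ^ w.length * c ^ cntP P w * (b' - a'))) * c := by ring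
        _ ≤ ((e' - d') * (b - a)) * c := by gcongr
        _ = (c * (e' - d')) * (b - a) := by ring
        _ ≤ _ := by gcongr
    · rw [cntP_cons_neg P k w hk]
      have hlen : q0 ≤ w.length := by
        by_contra hlt
        exact hk ⟨none, by simp only [hitP, List.length_cons]; omega⟩
      have hy : ∀ j, 2 * η < |compFam (paramFun m l p) w x0 - p.1 k j| := by
        intro j
        by_contra hlt
        exact hk ⟨some ⟨k, j⟩, w, rfl, not_lt.1 hlt⟩
      have u1 := plFun_diam_linear (hq.1 k) (q.2.2 k) (q.2.1 k)
        (slopeIdx (p.1 k) (compFam (paramFun m l p) w x0)) hde (fun u hu => by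
          rw [← hD] at hu
          obtain ⟨x, hx, rfl⟩ := hu
          exact slopeIdx_stable (hη k) hy (h1 w hlen x hx))
      have u2 := plFun_diam_linear (hq'.1 k) (q'.2.2 k) (q'.2.1 k)
        (slopeIdx (p.1 k) (compFam (paramFun m l p) w x0)) hde' (fun u hu => by
          rw [← hE] at hu
          obtain ⟨x, hx, rfl⟩ := hu
          exact slopeIdx_stable (hη' k) hy (h2 w hlen x hx))
      set i := slopeIdx (p.1 k) (compFam (paramFun m l p) w x0)
      change Metric.diam (plFun (q.1 k) (q.2.2 k) (q.2.1 k) '' Icc d e) * _ ≤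
        Metric.diam (plFun (q'.1 k) (q'.2.2 k) (q'.2.1 k) '' Icc d' e') * _
      rw [u1, u2]
      have h3 := hθ k i
      calc _ = ((e - d) * (θ ^ w.length * c ^ cntP P w * (b' - a'))) * (θ * |q.2.2 k i|) := by ring
        _ ≤ ((e' - d') * (b - a)) * (θ * |q.2.2 k i|) := by gcongr
        _ ≤ ((e' - d') * (b - a)) * |q'.2.2 k i| := by
          have : 0 ≤ (e' - d') * (b - a) := mul_nonneg (by linarith) hba.le
          gcongr
        _ = _ := by ring

theorem cntP_length {ι : Type*} (q0 : ℕ) (w : List ι) :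
    cntP (fun u : List ι => u.length ≤ q0) w ≤ q0 := by
  have : cntP (fun u : List ι => u.length ≤ q0) w ≤ min w.length q0 := by
    induction w with
    | nil => simp [cntP]
    | cons k w ih =>
      by_cases h : (k :: w).length ≤ q0
      · rw [cntP_cons_pos _ k w h]
        simp only [List.length_cons] at *
        omega
      · rw [cntP_cons_neg _ k w h]
        simp only [List.length_cons] at *
        omega
  omega

theorem compFam_lip {ι : Type*} {f : ι → ℝ → ℝ} (hf : ∀ k x y, |f k y - f k x| ≤ |y - x|)
    (w : List ι) (x y : ℝ) : |compFam f w y - compFam f w x| ≤ |y - x| := by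
  induction w with
  | nil => exact le_rfl
  | cons k w ih => exact (hf k _ _).trans ih

theorem hit_count {p : Param m l} (hp : p ∈ Gamma m l) {η x0 : ℝ} {q0 N : ℕ}
    (hη : ∀ k j (v : List (Fin m)), v.length + 1 ≤ N →
      4 * η < |compFam (paramFun m l p) (v ++ [k]) (p.1 k j) - p.1 k j|) (w : List (Fin m)) :
    cntP (fun u => ∃ o, hitP p x0 η q0 o u) w * N ≤
      q0 * N + Fintype.card (Σ k : Fin m, Fin (l k)) * (w.length + N) := by
  have h1 := cntP_exists_le (hitP p x0 η q0) w
  rw [Fintype.sum_option] at h1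
  have h2 : cntP (hitP p x0 η q0 none) w ≤ q0 := cntP_length q0 w
  have h3 : ∀ q : Σ k : Fin m, Fin (l k), cntP (hitP p x0 η q0 (some q)) w * N ≤ w.length + N := by
    rintro ⟨k, j⟩
    apply cntP_bound
    rintro u v hv ⟨w1, rfl, hw1⟩ ⟨w2, h, hw2⟩
    cases v with
    | nil => exact absurd rfl hv
    | cons k' v =>
      simp only [List.cons_append, List.cons.injEq] at h
      obtain ⟨rfl, rfl⟩ := h
      by_contra hlt
      simp only [List.length_cons] at hlt
      have h4 := hη k' j v (by omega)
      have e : compFam (paramFun m l p) (v ++ k' :: w1) x0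
          = compFam (paramFun m l p) (v ++ [k']) (compFam (paramFun m l p) w1 x0) := by
        rw [← compFam_append]; simp
      simp only at hw1 hw2
      rw [e] at hw2
      have h5 := compFam_lip (f := paramFun m l p) (fun k x y => by
        have := plFun_lip (hp.1 k) (p.2.2 k) (p.2.1 k) (M := 1) (fun i => (hp.2.1 k i).2.le) x y
        rw [one_mul] at this; exact this) (v ++ [k']) (compFam (paramFun m l p) w1 x0) (p.1 k' j)
      rw [abs_sub_comm (p.1 k' j)] at h5
      have h6 := abs_sub_le (compFam (paramFun m l p) (v ++ [k']) (p.1 k' j))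
        (compFam (paramFun m l p) (v ++ [k']) (compFam (paramFun m l p) w1 x0)) (p.1 k' j)
      linarith
  calc _ ≤ (cntP (hitP p x0 η q0 none) w + ∑ q, cntP (hitP p x0 η q0 (some q)) w) * N :=
        Nat.mul_le_mul_right _ h1
    _ = cntP (hitP p x0 η q0 none) w * N + ∑ q, cntP (hitP p x0 η q0 (some q)) w * N := by
        rw [Nat.add_mul, Finset.sum_mul]
    _ ≤ q0 * N + ∑ _q : (Σ k : Fin m, Fin (l k)), (w.length + N) :=
        Nat.add_le_add (Nat.mul_le_mul_right _ h2) (Finset.sum_le_sum fun q _ => h3 q)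
    _ = _ := by simp

end Compare

section Main
variable {m l}

theorem gamma_bounds (hm : 0 < m) {q : Param m l} (hq : q ∈ Gamma m l) :
    ∃ r ρ : ℝ, 0 < r ∧ r ≤ ρ ∧ ρ < 1 ∧ ∀ k i, r ≤ |q.2.2 k i| ∧ |q.2.2 k i| ≤ ρ := by
  have hne : (Finset.univ : Finset (Σ k : Fin m, Fin (l k + 1))).Nonempty :=
    ⟨⟨⟨0, hm⟩, 0⟩, Finset.mem_univ _⟩
  obtain ⟨s, _, hs⟩ := Finset.exists_min_image Finset.univ
    (fun s : Σ k : Fin m, Fin (l k + 1) => |q.2.2 s.1 s.2|) hne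
  obtain ⟨t, _, ht⟩ := Finset.exists_max_image Finset.univ
    (fun s : Σ k : Fin m, Fin (l k + 1) => |q.2.2 s.1 s.2|) hne
  exact ⟨_, _, abs_pos.2 (hq.2.1 s.1 s.2).1, ht s (Finset.mem_univ _), (hq.2.1 t.1 t.2).2,
    fun k i => ⟨hs ⟨k, i⟩ (Finset.mem_univ _), ht ⟨k, i⟩ (Finset.mem_univ _)⟩⟩

theorem paramFun_lip {q : Param m l} (hq : q ∈ Gamma m l) {ρ : ℝ}
    (hρ : ∀ k i, |q.2.2 k i| ≤ ρ) (k : Fin m) (x y : ℝ) :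
    |paramFun m l q k y - paramFun m l q k x| ≤ ρ * |y - x| :=
  plFun_lip (hq.1 k) _ _ (hρ k) x y

theorem const_c (l : Fin m → ℕ) {r : ℝ} (hr : 0 < r) (hr1 : r ≤ 1) :
    ∃ c : ℝ, 0 < c ∧ c ≤ 1 ∧ ∀ k, c ≤ r / (l k + 1) := by
  refine ⟨r / ((∑ k, l k : ℕ) + 1), by positivity, ?_, fun k => ?_⟩
  · rw [div_le_one (by positivity)]
    have : (0:ℝ) ≤ ((∑ k, l k : ℕ) : ℝ) := Nat.cast_nonneg _
    linarith
  · have h : l k ≤ ∑ k, l k := Finset.single_le_sum (fun _ _ => Nat.zero_le _) (Finset.mem_univ k)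
    have h' : (l k : ℝ) ≤ ((∑ k, l k : ℕ) : ℝ) := by exact_mod_cast h
    gcongr

/-- Exponential bounds on the lengths of cylinder intervals. -/
theorem diam_bounds (hm : 0 < m) {q : Param m l} (hq : q ∈ Gamma m l) :
    ∃ a1 a2 b2 lam : ℝ, 0 ≤ a1 ∧ 0 ≤ a2 ∧ 0 ≤ b2 ∧ 0 < lam ∧ ∀ w : List (Fin m),
      Real.exp (-(a2 + b2 * w.length)) ≤
        Metric.diam (compFam (paramFun m l q) w '' suppInt (paramFun m l q)) ∧
      Metric.diam (compFam (paramFun m l q) w '' suppInt (paramFun m l q)) ≤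
        Real.exp (a1 - lam * w.length) := by
  obtain ⟨r, ρ, hr0, hrρ, hρ1, hb⟩ := gamma_bounds hm hq
  have hρ0 : 0 < ρ := by linarith
  obtain ⟨c, hc0, hc1, hc⟩ := const_c l hr0 (by linarith)
  obtain ⟨a, b, hab, hI, _, _⟩ := suppInt_spec hm hρ0.le hρ1 (paramFun_lip hq fun k i => (hb k i).2)
  have hba : 0 < b - a := by linarith
  rw [hI]
  have key : ∀ w : List (Fin m), c ^ w.length * (b - a) ≤
        Metric.diam (compFam (paramFun m l q) w '' Icc a b) ∧
      Metric.diam (compFam (paramFun m l q) w '' Icc a b) ≤ ρ ^ w.length * (b - a) := by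
    intro w
    induction w with
    | nil => simp [compFam, Real.diam_Icc hab.le]
    | cons k w ih =>
      obtain ⟨d, e, hde, hD⟩ := compFam_image_Icc (paramFun_continuous hq) hab.le w
      rw [compFam_image_cons, hD, List.length_cons, pow_succ, pow_succ]
      rw [hD, Real.diam_Icc hde] at ih
      have u1 : Metric.diam (paramFun m l q k '' Icc d e) ≤ ρ * (e - d) :=
        diam_image_le hρ0.le hde fun x _ y _ => paramFun_lip hq (fun k i => (hb k i).2) k x y
      have u2 : c * (e - d) ≤ Metric.diam (paramFun m l q k '' Icc d e) :=
        plFun_diam_lower (hq.1 k) _ _ (fun i => (hb k i).1) (hc k) hde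
      constructor
      · nlinarith [ih.1]
      · nlinarith [ih.2]
  have hpow : ∀ (x : ℝ) (n : ℕ), 0 < x → x ^ n = Real.exp (Real.log x * n) := by
    intro x n hx
    rw [mul_comm, Real.exp_nat_mul, Real.exp_log hx]
  refine ⟨|Real.log (b - a)|, |Real.log (b - a)|, -Real.log c, -Real.log ρ, abs_nonneg _,
    abs_nonneg _, ?_, ?_, fun w => ⟨le_trans ?_ (key w).1, le_trans (key w).2 ?_⟩⟩
  · have := Real.log_nonpos hc0.le hc1; linarith
  · have := Real.log_neg hρ0 hρ1; linarith
  · rw [hpow c _ hc0]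
    conv_rhs => rw [← Real.exp_log hba]
    rw [← Real.exp_add]
    apply Real.exp_le_exp.2
    have := neg_abs_le (Real.log (b - a))
    linarith
  · rw [hpow ρ _ hρ0]
    conv_lhs => rw [← Real.exp_log hba]
    rw [← Real.exp_add]
    apply Real.exp_le_exp.2
    have := le_abs_self (Real.log (b - a))
    linarith

theorem ratio_aux {X Y T u v B t : ℝ} (h : X * (T * v) ≤ Y * u) (hX : 0 ≤ X) (hY : 0 ≤ Y)
    (hu : 0 < u) (hv : 0 < v) (hT : Real.exp (-(B + t)) ≤ T) :
    X ≤ Real.exp ((B + |Real.log u| + |Real.log v|) + t) * Y := by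
  have h1 : X * (Real.exp (-(B + t)) * v) ≤ Y * u := le_trans (by gcongr) h
  have h2 : u ≤ Real.exp |Real.log u| := by
    conv_lhs => rw [← Real.exp_log hu]
    exact Real.exp_le_exp.2 (le_abs_self _)
  have h3 : Real.exp (-|Real.log v|) ≤ v := by
    conv_rhs => rw [← Real.exp_log hv]
    exact Real.exp_le_exp.2 (neg_abs_le _)
  have h4 : X * (Real.exp (-(B + t)) * Real.exp (-|Real.log v|)) ≤ Y * Real.exp |Real.log u| := by
    refine le_trans ?_ (h1.trans ?_)
    · gcongr
    · gcongr
  rw [← Real.exp_add] at h4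
  have h5 := mul_le_mul_of_nonneg_left h4 (Real.exp_pos (B + t + |Real.log v|)).le
  have e1 : Real.exp (B + t + |Real.log v|) * (X * Real.exp (-(B + t) + -|Real.log v|)) = X := by
    rw [mul_left_comm, ← Real.exp_add]
    rw [show B + t + |Real.log v| + (-(B + t) + -|Real.log v|) = 0 by ring]; simp
  rw [e1] at h5
  refine h5.trans (le_of_eq ?_)
  rw [mul_left_comm, ← Real.exp_add, mul_comm]
  congr 2; ring

set_option maxHeartbeats 2000000 in
/-- Uniform comparison of cylinder lengths in a neighbourhood. -/
theorem compare_nhds (hm : 0 < m) {p : Param m l} (hp : p ∈ Gamma m l)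
    (hno : ∃ t : (k : Fin m) → Fin (l k + 1) → ℝ,
      (∀ (k : Fin m) (i : Fin (l k + 1)) (x : ℝ),
        (∀ j : Fin (l k), (j : ℕ) < (i : ℕ) → p.1 k j < x) →
        (∀ j : Fin (l k), (i : ℕ) ≤ (j : ℕ) → x < p.1 k j) →
        paramFun m l p k x = p.2.2 k i * x + t k i) ∧
      NoExactOverlap (fun q : Σ k : Fin m, Fin (l k + 1) =>
        fun x => p.2.2 q.1 q.2 * x + t q.1 q.2)) {ε : ℝ} (hε : 0 < ε) :
    ∀ᶠ q in nhdsWithin p (Gamma m l), ∃ A : ℝ, ∀ w : List (Fin m),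
      Metric.diam (compFam (paramFun m l p) w '' suppInt (paramFun m l p)) ≤
        Real.exp (A + ε * w.length) *
          Metric.diam (compFam (paramFun m l q) w '' suppInt (paramFun m l q)) ∧
      Metric.diam (compFam (paramFun m l q) w '' suppInt (paramFun m l q)) ≤
        Real.exp (A + ε * w.length) *
          Metric.diam (compFam (paramFun m l p) w '' suppInt (paramFun m l p)) := by
  obtain ⟨r', ρ', hr0', hrρ', hρ1', hb'⟩ := gamma_bounds hm hp
  -- uniform constants
  set r := r' / 2 with hr
  set ρ := (1 + ρ') / 2 with hρ
  have hr0 : 0 < r := by positivity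
  have hρ0 : 0 ≤ ρ := by rw [hρ]; linarith
  have hρ1 : ρ < 1 := by rw [hρ]; linarith
  obtain ⟨c, hc0, hc1, hc⟩ := const_c l hr0 (by rw [hr]; linarith)
  obtain ⟨a, b, hab, hI, hinv, _⟩ := suppInt_spec hm hρ0 hρ1
    (paramFun_lip hp fun k i => (hb' k i).2.trans (by rw [hρ]; linarith : ρ' ≤ ρ))
  set L : ℕ := Fintype.card (Σ k : Fin m, Fin (l k)) with hL
  set β : ℝ := -Real.log c with hβ
  have hβ0 : 0 ≤ β := by have := Real.log_nonpos hc0.le hc1; rw [hβ]; linarith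
  set θ : ℝ := Real.exp (-(ε / 2)) with hθ
  have hθ0 : 0 < θ := Real.exp_pos _
  have hθ1 : θ < 1 := by rw [hθ, ← Real.exp_zero]; exact Real.exp_lt_exp.2 (by linarith)
  obtain ⟨N, hN⟩ := exists_nat_gt (L * β / (ε / 2))
  have hN0 : (0:ℝ) < N := lt_of_le_of_lt (by positivity) hN
  have hN' : L * β ≤ N * (ε / 2) := by
    rw [div_lt_iff₀ (by linarith)] at hN; exact hN.le
  -- the radius from the absence of returns
  obtain ⟨η, hη0, hη⟩ : ∃ η : ℝ, 0 < η ∧ ∀ k j (v : List (Fin m)), v.length + 1 ≤ N →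
      4 * η < |compFam (paramFun m l p) (v ++ [k]) (p.1 k j) - p.1 k j| := by
    have hfin : {v : List (Fin m) | v.length ≤ N}.Finite := List.finite_length_le (Fin m) N
    have h1 : ∀ᶠ η in nhdsWithin (0:ℝ) (Ioi 0), ∀ s : (Σ k : Fin m, Fin (l k)),
        ∀ v ∈ {v : List (Fin m) | v.length ≤ N},
        4 * η < |compFam (paramFun m l p) (v ++ [s.1]) (p.1 s.1 s.2) - p.1 s.1 s.2| := by
      rw [eventually_all]
      intro s
      rw [eventually_all_finite hfin]
      intro v _
      have hpos : 0 < |compFam (paramFun m l p) (v ++ [s.1]) (p.1 s.1 s.2) - p.1 s.1 s.2| :=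
        abs_pos.2 (sub_ne_zero.2 (no_return hp hno s.1 s.2 v))
      have ht : Tendsto (fun η : ℝ => 4 * η) (nhdsWithin 0 (Ioi 0)) (nhds (4 * 0)) :=
        ((continuous_const.mul continuous_id).tendsto 0).mono_left nhdsWithin_le_nhds
      rw [mul_zero] at ht
      exact ht.eventually (gt_mem_nhds hpos)
    obtain ⟨η, h2, h3⟩ := (h1.and self_mem_nhdsWithin).exists
    exact ⟨η, h3, fun k j v hv => h2 ⟨k, j⟩ v (by change v.length ≤ N; omega)⟩
  have h1ρ : 0 < 1 - ρ := by linarith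
  obtain ⟨q0, hq0⟩ : ∃ q0 : ℕ, ρ ^ q0 * (b - a + 4) ≤ η / 2 := by
    have hpos : 0 < η / 2 / (b - a + 4) := by
      have : 0 < b - a + 4 := by linarith
      positivity
    obtain ⟨q0, h⟩ := exists_pow_lt_of_lt_one hpos hρ1
    exact ⟨q0, by rw [lt_div_iff₀ (by linarith)] at h; exact h.le⟩
  set δ : ℝ := min 1 (η / 2) * (1 - ρ) with hδ
  have hδ0 : 0 < δ := by positivity
  have hδη : δ / (1 - ρ) ≤ η / 2 := by
    rw [hδ, mul_div_assoc, div_self h1ρ.ne', mul_one]; exact min_le_right _ _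
  have hδ1 : δ ≤ 1 - ρ := by
    rw [hδ]
    have := min_le_left 1 (η / 2)
    nlinarith
  set R : ℝ := |a| + |b| with hR
  set K : ℝ := 1 + R + (∑ k, l k : ℕ) * (2 * R + 4) with hK
  have hR0 : 0 ≤ R := by positivity
  have hK0 : 0 < K := by positivity
  obtain ⟨d, hd0, hdη, hdr, hdρ, hdθ, hdK⟩ : ∃ d : ℝ, 0 < d ∧ d ≤ η ∧ d ≤ r ∧ d ≤ (1 - ρ') / 2 ∧
      d ≤ (1 - θ) * r ∧ d * K ≤ δ := by
    have e1 : 0 < (1 - θ) * r := mul_pos (by linarith) hr0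
    have e2 : 0 < (1 - ρ') / 2 := by linarith
    have e3 : 0 < δ / K := by positivity
    refine ⟨min (min η r) (min (min ((1 - ρ') / 2) ((1 - θ) * r)) (δ / K)), by positivity,
      (min_le_left _ _).trans (min_le_left _ _), (min_le_left _ _).trans (min_le_right _ _),
      (min_le_right _ _).trans ((min_le_left _ _).trans (min_le_left _ _)),
      (min_le_right _ _).trans ((min_le_left _ _).trans (min_le_right _ _)), ?_⟩
    rw [← le_div_iff₀ hK0]
    exact (min_le_right _ _).trans (min_le_right _ _)
  filter_upwards [mem_nhdsWithin_of_mem_nhds (Metric.ball_mem_nhds p hd0), self_mem_nhdsWithin]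
    with q hqd hq
  have hqd' : dist q p ≤ d := (Metric.mem_ball.1 hqd).le
  have d1 : ∀ k j, |q.1 k j - p.1 k j| ≤ d := fun k j => by
    rw [← Real.dist_eq]
    refine (dist_le_pi_dist (q.1 k) (p.1 k) j).trans ((dist_le_pi_dist q.1 p.1 k).trans ?_)
    exact (le_max_left _ _).trans hqd'
  have d2 : ∀ k, |q.2.1 k - p.2.1 k| ≤ d := fun k => by
    rw [← Real.dist_eq]
    refine (dist_le_pi_dist q.2.1 p.2.1 k).trans ?_
    exact (le_max_left _ _).trans ((le_max_right (dist q.1 p.1) (dist q.2 p.2)).trans hqd')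
  have d3 : ∀ k i, |q.2.2 k i - p.2.2 k i| ≤ d := fun k i => by
    rw [← Real.dist_eq]
    refine (dist_le_pi_dist (q.2.2 k) (p.2.2 k) i).trans
      ((dist_le_pi_dist q.2.2 p.2.2 k).trans ?_)
    exact (le_max_right _ _).trans ((le_max_right (dist q.1 p.1) (dist q.2 p.2)).trans hqd')
  have sl1 : ∀ k i, |q.2.2 k i| ≤ |p.2.2 k i| + d := fun k i => by
    have := abs_sub_abs_le_abs_sub (q.2.2 k i) (p.2.2 k i)
    linarith [d3 k i]
  have sl2 : ∀ k i, |p.2.2 k i| ≤ |q.2.2 k i| + d := fun k i => by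
    have := abs_sub_abs_le_abs_sub (p.2.2 k i) (q.2.2 k i)
    rw [abs_sub_comm (p.2.2 k i)] at this
    linarith [d3 k i]
  have rq : ∀ k i, r ≤ |q.2.2 k i| := fun k i => by
    have := (hb' k i).1
    have := sl2 k i
    rw [hr] at *; linarith
  have rp : ∀ k i, r ≤ |p.2.2 k i| := fun k i => by
    have := (hb' k i).1
    rw [hr] at *; linarith
  have ρp : ∀ k i, |p.2.2 k i| ≤ ρ := fun k i => by
    have := (hb' k i).2
    rw [hρ]; linarith
  have ρq : ∀ k i, |q.2.2 k i| ≤ ρ := fun k i => by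
    have := (hb' k i).2
    have := sl1 k i
    rw [hρ]; linarith
  have θ1 : ∀ k i, θ * |p.2.2 k i| ≤ |q.2.2 k i| := fun k i => by
    have h1 := mul_le_mul_of_nonneg_left (rp k i) (by linarith : 0 ≤ 1 - θ)
    have h2 := sl2 k i
    nlinarith
  have θ2 : ∀ k i, θ * |q.2.2 k i| ≤ |p.2.2 k i| := fun k i => by
    have h1 := mul_le_mul_of_nonneg_left (rq k i) (by linarith : 0 ≤ 1 - θ)
    have h2 := sl1 k i
    nlinarith
  -- closeness of the maps on the supporting interval
  have hclose : ∀ k, ∀ x ∈ Icc a b, |paramFun m l q k x - paramFun m l p k x| ≤ δ := by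
    intro k x hx
    have hxR : |x| ≤ R := by
      rw [abs_le, hR]
      constructor
      · linarith [hx.1, neg_abs_le a, abs_nonneg b]
      · linarith [hx.2, le_abs_self b, abs_nonneg a]
    refine (plFun_close (hp.1 k) (hq.1 k) (p.2.2 k) (q.2.2 k) (p.2.1 k) (q.2.1 k) (d1 k) (d3 k)
      (d2 k) (fun i => (hp.2.1 k i).2.le) hxR).trans (le_trans ?_ hdK)
    apply mul_le_mul_of_nonneg_left _ hd0.le
    rw [hK]
    have h : l k ≤ ∑ k, l k := Finset.single_le_sum (fun _ _ => Nat.zero_le _) (Finset.mem_univ k)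
    have h' : (l k : ℝ) ≤ ((∑ k, l k : ℕ) : ℝ) := by exact_mod_cast h
    gcongr
  obtain ⟨a', b', hab', hI', hinv', hcase⟩ := suppInt_spec hm hρ0 hρ1 (paramFun_lip hq ρq)
  have hsub : ∀ x ∈ Icc a' b', |x - a| ≤ b - a + 4 := by
    have hsub' : Icc a' b' ⊆ Icc (a - 2) (b + 2) := by
      rcases hcase with ⟨φ, hφ, rfl, rfl⟩ | hmin
      · obtain ⟨u, hu, hu'⟩ := fixed_near hab.le (paramFun_lip hq ρq ⟨0, hm⟩) (hφ ⟨0, hm⟩)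
          (hinv ⟨0, hm⟩) (hclose ⟨0, hm⟩)
        have h1 : |φ - u| ≤ 1 := by
          by_contra hlt
          nlinarith
        rw [abs_le] at h1
        apply Icc_subset_Icc <;> linarith [hu.1, hu.2, h1.1, h1.2]
      · refine (hmin (a - 1) (b + 1) (by linarith) fun k x hx => ?_).trans
          (Icc_subset_Icc (by linarith) (by linarith))
        have hu := clamp_mem hab.le x
        have hxu : |x - max a (min b x)| ≤ 1 := by
          rcases le_total x a with h | h
          · refine (clamp_near hab.le x a ⟨le_rfl, hab.le⟩).trans ?_
            rw [abs_le]; constructor <;> linarith [hx.1]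
          · rcases le_total b x with h' | h'
            · refine (clamp_near hab.le x b ⟨hab.le, le_rfl⟩).trans ?_
              rw [abs_le]; constructor <;> linarith [hx.2]
            · refine (clamp_near hab.le x x ⟨h, h'⟩).trans ?_
              simp
        have h1 := paramFun_lip hq ρq k (max a (min b x)) x
        have h2 := hclose k _ hu
        have h3 := hinv k _ hu
        have h4 := abs_sub_le (paramFun m l q k x) (paramFun m l q k (max a (min b x)))
          (paramFun m l p k (max a (min b x)))
        have h5 : |paramFun m l q k x - paramFun m l p k (max a (min b x))| ≤ 1 := by nlinarith
        rw [abs_le] at h5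
        constructor <;> linarith [h3.1, h3.2, h5.1, h5.2]
    intro x hx
    have := hsub' hx
    rw [abs_le]; constructor <;> linarith [this.1, this.2]
  have near : ∀ {x : ℝ} {w : List (Fin m)}, q0 ≤ w.length → |x - a| ≤ b - a + 4 →
      ρ ^ w.length * |x - a| + δ / (1 - ρ) ≤ η := by
    intro x w hw hx
    have h1 : ρ ^ w.length ≤ ρ ^ q0 := pow_le_pow_of_le_one hρ0 hρ1.le hw
    have h2 : ρ ^ w.length * |x - a| ≤ ρ ^ q0 * (b - a + 4) := by gcongr
    linarith
  have ha : a ∈ Icc a b := ⟨le_rfl, hab.le⟩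
  have s1 : ∀ w : List (Fin m), q0 ≤ w.length → ∀ x ∈ Icc a b,
      |compFam (paramFun m l p) w x - compFam (paramFun m l p) w a| ≤ η := by
    intro w hw x hx
    refine (shadow hρ0 hρ1 hδ0.le (paramFun_lip hp ρp) hinv ha (fun k x _ => ?_) w x).trans
      (near hw ?_)
    · rw [sub_self, abs_zero]; exact hδ0.le
    · rw [abs_le]; constructor <;> linarith [hx.1, hx.2]
  have s2 : ∀ w : List (Fin m), q0 ≤ w.length → ∀ x ∈ Icc a' b',
      |compFam (paramFun m l q) w x - compFam (paramFun m l p) w a| ≤ η := by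
    intro w hw x hx
    exact (shadow hρ0 hρ1 hδ0.le (paramFun_lip hq ρq) hinv ha hclose w x).trans
      (near hw (hsub x hx))
  have hself : ∀ k j, |p.1 k j - p.1 k j| ≤ η := fun k j => by
    rw [sub_self, abs_zero]; exact hη0.le
  have hqη : ∀ k j, |q.1 k j - p.1 k j| ≤ η := fun k j => (d1 k j).trans hdη
  have hcnt : ∀ w : List (Fin m), Real.exp (-((q0 + L) * β + ε * w.length)) ≤
      θ ^ w.length * c ^ cntP (fun u => ∃ o, hitP p a η q0 o u) w := by
    intro w
    have h1 := hit_count hp (x0 := a) (q0 := q0) hη w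
    set H := cntP (fun u => ∃ o, hitP p a η q0 o u) w
    have h2 : (H : ℝ) * N ≤ q0 * N + L * (w.length + N) := by exact_mod_cast h1
    have h3 : (H : ℝ) * β ≤ (q0 + L) * β + (ε / 2) * w.length := by
      have h4 := mul_le_mul_of_nonneg_right h2 hβ0
      have h5 := mul_le_mul_of_nonneg_right hN' (Nat.cast_nonneg (α := ℝ) w.length)
      have h6 : (H : ℝ) * β * N ≤ ((q0 + L) * β + (ε / 2) * w.length) * N := by linarith
      exact le_of_mul_le_mul_right h6 hN0
    have e1 : θ ^ w.length = Real.exp (w.length * (-(ε / 2))) := by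
      rw [Real.exp_nat_mul]
    have e2 : c ^ H = Real.exp (H * (-β)) := by
      rw [Real.exp_nat_mul, hβ, neg_neg, Real.exp_log hc0]
    rw [e1, e2, ← Real.exp_add]
    apply Real.exp_le_exp.2
    linarith
  rw [hI, hI']
  have hv : 0 < b - a := by linarith
  have hv' : 0 < b' - a' := by linarith
  refine ⟨(q0 + L) * β + |Real.log (b - a)| + |Real.log (b' - a')|, fun w => ⟨?_, ?_⟩⟩
  · exact ratio_aux (compare hp hq hself hqη hθ0 hθ1.le hc0 θ1 rq hc hab hab' s1 s2 w)
      Metric.diam_nonneg Metric.diam_nonneg hv hv' (hcnt w)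
  · have := ratio_aux (compare hq hp hqη hself hθ0 hθ1.le hc0 θ2 rp hc hab' hab s2 s1 w)
      Metric.diam_nonneg Metric.diam_nonneg hv' hv (hcnt w)
    rw [add_right_comm ((q0 + L : ℝ) * β)] at this
    exact this

/-! ### Pressure -/

theorem limsup_le_aux {u v : ℕ → ℝ} {a b B : ℝ}
    (hu : ∃ c, ∀ᶠ n in atTop, c ≤ u n) (hv : ∀ᶠ n in atTop, v n ≤ B)
    (h : ∀ᶠ n : ℕ in atTop, u n ≤ v n + a * (n:ℝ)⁻¹ + b) :
    limsup u atTop ≤ limsup v atTop + b := by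
  obtain ⟨c, hc⟩ := hu
  apply le_of_forall_pos_le_add
  intro e he
  have h1 : ∀ᶠ n in atTop, v n < limsup v atTop + e / 2 :=
    eventually_lt_of_limsup_lt (by linarith) ⟨B, by simpa using hv⟩
  have h2 : Tendsto (fun n : ℕ => a * (n:ℝ)⁻¹) atTop (nhds (a * 0)) :=
    tendsto_inv_atTop_nhds_zero_nat.const_mul a
  rw [mul_zero] at h2
  have h3 : ∀ᶠ n : ℕ in atTop, a * (n:ℝ)⁻¹ < e / 2 := h2.eventually (gt_mem_nhds (by linarith))
  refine limsup_le_of_le ?_ ?_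
  · exact IsBoundedUnder.isCoboundedUnder_le ⟨c, by simpa using hc⟩
  · filter_upwards [h, h1, h3] with n e1 e2 e3
    linarith

theorem pressure_le {m : ℕ} (hm : 0 < m) {f g : Fin m → ℝ → ℝ} {s s' a b a1 a2 b2 : ℝ}
    (hs : 0 ≤ s) (hs' : 0 ≤ s') (ha1 : 0 ≤ a1) (ha2 : 0 ≤ a2)
    (hf : ∀ w, Real.exp (-(a2 + b2 * w.length)) ≤ Metric.diam (compFam f w '' suppInt f))
    (hg : ∀ w, Metric.diam (compFam g w '' suppInt g) ≤ Real.exp a1)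
    (h : ∀ w, Metric.diam (compFam f w '' suppInt f) ^ s ≤
      Real.exp (a + b * w.length) * Metric.diam (compFam g w '' suppInt g) ^ s') :
    pressure f s ≤ pressure g s' + b := by
  have : Nonempty (Fin m) := ⟨⟨0, hm⟩⟩
  set Z : ℕ → ℝ := fun n => ∑ w : Fin n → Fin m,
    Metric.diam (compFam f (List.ofFn w) '' suppInt f) ^ s with hZ
  set W : ℕ → ℝ := fun n => ∑ w : Fin n → Fin m,
    Metric.diam (compFam g (List.ofFn w) '' suppInt g) ^ s' with hW
  have hZlow : ∀ n : ℕ, Real.exp (-(a2 + b2 * n) * s) ≤ Z n := by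
    intro n
    have w0 : Fin n → Fin m := fun _ => ⟨0, hm⟩
    have h1 : Metric.diam (compFam f (List.ofFn w0) '' suppInt f) ^ s ≤ Z n :=
      Finset.single_le_sum (f := fun w : Fin n → Fin m =>
        Metric.diam (compFam f (List.ofFn w) '' suppInt f) ^ s)
        (fun w _ => Real.rpow_nonneg Metric.diam_nonneg _) (Finset.mem_univ w0)
    refine le_trans ?_ h1
    rw [Real.exp_mul]
    have h2 := hf (List.ofFn w0)
    rw [List.length_ofFn] at h2
    exact Real.rpow_le_rpow (Real.exp_pos _).le h2 hs
  have hZpos : ∀ n, 0 < Z n := fun n => (Real.exp_pos _).trans_le (hZlow n)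
  have hZW : ∀ n : ℕ, Z n ≤ Real.exp (a + b * n) * W n := by
    intro n
    rw [hW, Finset.mul_sum]
    apply Finset.sum_le_sum
    intro w _
    have := h (List.ofFn w)
    rw [List.length_ofFn] at this
    exact this
  have hWpos : ∀ n, 0 < W n := fun n =>
    pos_of_mul_pos_right ((hZpos n).trans_le (hZW n)) (Real.exp_pos _).le
  have hWup : ∀ n, W n ≤ (m:ℝ) ^ n * Real.exp (a1 * s') := by
    intro n
    have : W n ≤ ∑ _w : Fin n → Fin m, Real.exp (a1 * s') := by
      apply Finset.sum_le_sum
      intro w _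
      rw [Real.exp_mul]
      exact Real.rpow_le_rpow Metric.diam_nonneg (hg _) hs'
    simpa using this
  have hm0 : (0:ℝ) < m := by exact_mod_cast hm
  apply limsup_le_aux (a := a) (B := Real.log m + a1 * s')
  · refine ⟨-(a2 + |b2|) * s, ?_⟩
    filter_upwards [eventually_ge_atTop 1] with n hn
    have hn1 : (1:ℝ) ≤ n := by exact_mod_cast hn
    have h1 : -(a2 + b2 * n) * s ≤ Real.log (Z n) :=
      (Real.le_log_iff_exp_le (hZpos n)).2 (hZlow n)
    rw [← div_eq_inv_mul, le_div_iff₀ (by linarith)]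
    refine le_trans ?_ h1
    have h2 : b2 * n ≤ |b2| * n := by gcongr; exact le_abs_self _
    have h3 : a2 ≤ a2 * n := by nlinarith
    nlinarith
  · filter_upwards [eventually_ge_atTop 1] with n hn
    have hn1 : (1:ℝ) ≤ n := by exact_mod_cast hn
    have h1 : Real.log (W n) ≤ n * Real.log m + a1 * s' := by
      refine (Real.log_le_log (hWpos n) (hWup n)).trans (le_of_eq ?_)
      rw [Real.log_mul (by positivity) (Real.exp_pos _).ne', Real.log_pow, Real.log_exp]
    rw [← div_eq_inv_mul, div_le_iff₀ (by linarith)]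
    have h3 : a1 * s' ≤ a1 * s' * n := by
      have := mul_nonneg ha1 hs'
      nlinarith
    refine h1.trans ?_
    linarith
  · filter_upwards [eventually_ge_atTop 1] with n hn
    have hn1 : (1:ℝ) ≤ n := by exact_mod_cast hn
    have h1 : Real.log (Z n) ≤ (a + b * n) + Real.log (W n) := by
      refine (Real.log_le_log (hZpos n) (hZW n)).trans (le_of_eq ?_)
      rw [Real.log_mul (Real.exp_pos _).ne' (hWpos n).ne', Real.log_exp]
    have h2 := mul_le_mul_of_nonneg_left h1 (by positivity : (0:ℝ) ≤ (n:ℝ)⁻¹)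
    refine h2.trans (le_of_eq ?_)
    have : (n:ℝ) ≠ 0 := by linarith
    field_simp
    ring

/-- Comparison of zeros. -/
theorem zero_compare {Φ Ψ : ℝ → ℝ} {lam ε ξ : ℝ} (hlam : 0 < lam) (hε : 0 < ε) (hξ : 0 < ξ)
    (hΦ : ∀ s t, 0 ≤ s → 0 ≤ t → Φ (s + t) ≤ Φ s - lam * t)
    (h1 : ∀ s, 0 ≤ s → Φ s ≤ Ψ s + ε * s) (h2 : ∀ s, 0 ≤ s → Ψ s ≤ Φ s + ε * s)
    (hs : ε * (sInf {s : ℝ | 0 ≤ s ∧ Φ s ≤ 0} + ξ) ≤ lam * (ξ / 2)) :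
    |sInf {s : ℝ | 0 ≤ s ∧ Ψ s ≤ 0} - sInf {s : ℝ | 0 ≤ s ∧ Φ s ≤ 0}| ≤ ξ := by
  set A := {s : ℝ | 0 ≤ s ∧ Φ s ≤ 0} with hA
  set B := {s : ℝ | 0 ≤ s ∧ Ψ s ≤ 0} with hB
  have hAb : BddBelow A := ⟨0, fun s hs => hs.1⟩
  have hBb : BddBelow B := ⟨0, fun s hs => hs.1⟩
  have hAne : A.Nonempty := by
    refine ⟨|Φ 0| / lam, by positivity, ?_⟩
    have := hΦ 0 (|Φ 0| / lam) le_rfl (by positivity)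
    rw [zero_add, mul_div_cancel₀ _ hlam.ne'] at this
    linarith [le_abs_self (Φ 0)]
  have hs0 : 0 ≤ sInf A := Real.sInf_nonneg fun s hs => hs.1
  have hmem : sInf A + ξ ∈ B := by
    obtain ⟨s', hs', hlt⟩ := (csInf_lt_iff hAb hAne).1 (by linarith : sInf A < sInf A + ξ / 2)
    have e1 := hΦ s' (sInf A + ξ - s') hs'.1 (by linarith)
    rw [add_sub_cancel] at e1
    have e2 := h2 (sInf A + ξ) (by linarith)
    refine ⟨by linarith, ?_⟩
    have := hs'.2
    nlinarith
  have hup : sInf B ≤ sInf A + ξ := csInf_le hBb hmem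
  have hlow : sInf A - ξ ≤ sInf B := by
    apply le_csInf ⟨_, hmem⟩
    intro s' hs'
    by_contra hlt
    push Not at hlt
    have e1 := h1 s' hs'.1
    have e2 := hΦ s' ξ hs'.1 hξ.le
    have e3 := hs'.2
    have : s' + ξ ∈ A := ⟨by linarith [hs'.1], by nlinarith⟩
    have := csInf_le hAb this
    linarith
  rw [abs_le]; constructor <;> linarith

end Main

/-- Fix a type `ℓ`.  Let `(b, τ, ρ) ∈ Γ^ℓ` be a parameter vector such that
the self-similar IFS generated by `F^{(b,τ,ρ)}` (the family of affine maps coinciding with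
the maps of `F^{(b,τ,ρ)}` on their intervals of linearity) has no exact overlapping.  Then
the map assigning to each parameter vector in `Γ^ℓ` the natural dimension of the
corresponding CPLIFS is continuous at `(b, τ, ρ)`. -/
theorem natDim_continuousWithinAt
    {m : ℕ} {l : Fin m → ℕ} (hm : 2 ≤ m)
    (p : Param m l) (hp : p ∈ Gamma m l)
    (hno : ∃ t : (k : Fin m) → Fin (l k + 1) → ℝ,
      (∀ (k : Fin m) (i : Fin (l k + 1)) (x : ℝ),
        (∀ j : Fin (l k), (j : ℕ) < (i : ℕ) → p.1 k j < x) →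
        (∀ j : Fin (l k), (i : ℕ) ≤ (j : ℕ) → x < p.1 k j) →
        paramFun m l p k x = p.2.2 k i * x + t k i) ∧
      NoExactOverlap (fun q : Σ k : Fin m, Fin (l k + 1) =>
        fun x => p.2.2 q.1 q.2 * x + t q.1 q.2)) :
    ContinuousWithinAt (natDim m l) (Gamma m l) p := by
  have hm0 : 0 < m := by omega
  obtain ⟨a1, a2, b2, lam, ha1, ha2, hb2, hlam, hbd⟩ := diam_bounds hm0 hp
  rw [ContinuousWithinAt, Metric.tendsto_nhds]
  intro ξ' hξ'
  set ξ := ξ' / 2 with hξdef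
  have hξ : 0 < ξ := by positivity
  have hs0 : 0 ≤ natDim m l p := Real.sInf_nonneg fun s hs => hs.1
  set ε := lam * (ξ / 2) / (natDim m l p + ξ) with hεdef
  have hε : 0 < ε := by positivity
  have hεle : ε * (natDim m l p + ξ) ≤ lam * (ξ / 2) := by
    rw [hεdef, div_mul_cancel₀ _ (by positivity)]
  filter_upwards [compare_nhds hm0 hp hno hε, self_mem_nhdsWithin] with q ⟨A, hA⟩ hq
  obtain ⟨a1', a2', b2', lam', ha1', ha2', hb2', hlam', hbd'⟩ := diam_bounds hm0 hq
  have up : ∀ w : List (Fin m),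
      Metric.diam (compFam (paramFun m l p) w '' suppInt (paramFun m l p)) ≤ Real.exp a1 :=
    fun w => (hbd w).2.trans (Real.exp_le_exp.2 (by
      have : 0 ≤ lam * w.length := by positivity
      linarith))
  have uq : ∀ w : List (Fin m),
      Metric.diam (compFam (paramFun m l q) w '' suppInt (paramFun m l q)) ≤ Real.exp a1' :=
    fun w => (hbd' w).2.trans (Real.exp_le_exp.2 (by
      have : 0 ≤ lam' * w.length := by positivity
      linarith))
  have gen : ∀ {X Y s : ℝ} {n : ℕ}, 0 ≤ s → 0 ≤ X → 0 ≤ Y → X ≤ Real.exp (A + ε * n) * Y →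
      X ^ s ≤ Real.exp (A * s + ε * s * n) * Y ^ s := by
    intro X Y s n hs hX hY h
    refine (Real.rpow_le_rpow hX h hs).trans (le_of_eq ?_)
    rw [Real.mul_rpow (Real.exp_pos _).le hY, ← Real.exp_mul]
    congr 2; ring
  have key := zero_compare (Φ := pressure (paramFun m l p)) (Ψ := pressure (paramFun m l q))
    (lam := lam) (ε := ε) (ξ := ξ) hlam hε hξ ?_ ?_ ?_ hεle
  · rw [Real.dist_eq]
    exact lt_of_le_of_lt key (by rw [hξdef]; linarith)
  · intro s t hs ht
    have := pressure_le hm0 (f := paramFun m l p) (g := paramFun m l p) (s := s + t) (s' := s)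
      (a := a1 * t) (b := -(lam * t)) (by linarith) hs ha1 ha2 (fun w => (hbd w).1) up (fun w => by
        have hpos : 0 < Metric.diam (compFam (paramFun m l p) w '' suppInt (paramFun m l p)) :=
          (Real.exp_pos _).trans_le (hbd w).1
        rw [Real.rpow_add hpos, mul_comm]
        apply mul_le_mul_of_nonneg_right _ (Real.rpow_nonneg hpos.le _)
        refine (Real.rpow_le_rpow hpos.le (hbd w).2 ht).trans (le_of_eq ?_)
        rw [← Real.exp_mul]
        congr 1; ring)
    linarith
  · intro s hs
    exact pressure_le hm0 hs hs ha1' ha2 (fun w => (hbd w).1) uq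
      (fun w => gen hs Metric.diam_nonneg Metric.diam_nonneg (hA w).1)
  · intro s hs
    exact pressure_le hm0 hs hs ha1 ha2' (fun w => (hbd' w).1) up
      (fun w => gen hs Metric.diam_nonneg Metric.diam_nonneg (hA w).2)

end
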